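/- Let q be a prime power and let f(x) = Σ_{j=0}^{k} a_j x^{q^j} ∈ F_{q^n}[x] be a monic F_q-linearized polynomial of q-degree k < n which is not a monomial, with a_t = 0 for the index t, and such that either t = 0 and a_0 = 0, or t ≥ 1, a_0 ≠ 0 and one of: (i) t = 1 and k ≥ 3; (ii) t ≥ 2, with k ≥ 3t if t | k and k ≥ 2t−1 if t ∤ k, and either f(x) = a_0 x + a_1 x^q + Σ_{j>t} a_j x^{q^j} with k ≥ t+2, or f(x) = a_0 x + Σ_{j>t} a_j x^{q^j}. Suppose f is r-fat of index t with maximum weight W ≥ 2, and that one of the following holds: q ≥ 4 and max{k,t} < n/4; or q = 3 and max{k,t} ≤ (n−2)/4; or q = 2 and max{k,t} ≤ n/4 − 1. Then r > 1 (in particular, the associated linear set is not a W-club). -/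

import Mathlib

/-!
Write `Q = q ^ t` and `Θ(x, y) = f(x) y^Q - f(y) x^Q`. The weight of `m` exceeds `1` exactly when
`Θ` has a zero `(x₀, y₀)` over `K` with `x₀ ≠ 0`, `f(x₀) = m x₀^Q`, and `y₀` not a multiple of `x₀`
by an element of the field with `q` elements. Suppose that `a 0 ≠ 0` and that only one `m₀` has
this property, and follow Stepanov's method. As `∂Θ/∂y = -a₀ x^Q`, the curve `Θ = 0` is smooth away
from `x = 0`, so the component through `(x₀, y₀)` carries a power series branch over `K`. Over any
other `x₁ ∈ K` with `f(x₁) ≠ m₀ x₁^Q`, the roots `y` in `K` of `Θ(x₁, y)` are the multiples of `x₁`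
by elements of the small field. A root `y₁` outside `K` comes with a second root `y₁^|K|`, so the
divided difference of `Θ(x₁, ·)`, evaluated at `y₁` and `y₁^|K|`, vanishes. Siegel's lemma yields a
combination of the translates of this divided difference along the flow tangent to the curve that
vanishes to high order at all of these points, hence, by counting zeros, on the whole component.
Replacing the `|K|`-th powers by the variables turns it into a nonzero multiple of its leading
coefficient, which is a contradiction.

If `a 0 = 0`, the substitution `z = x^(q^s)` lowers all exponents until `a 0 ≠ 0` or `t = 0`, and
for `t = 0` the adjoint polynomial has the same weights and a nonzero coefficient at `0`.
-/

open Finset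

local notation:9000 R "[X,Y]" => MvPolynomial (Fin 2) R

section PowerSeriesLemmas

open PowerSeries

variable {A : Type*} [CommRing A]

theorem exists_isFixedPt_of_X_mul_sub_dvd (Ψ : A⟦X⟧ → A⟦X⟧)
    (hΨ : ∀ u v, X * (u - v) ∣ Ψ u - Ψ v) :
    ∃ z, Ψ z = z ∧ ∀ m, X ^ m ∣ z - Ψ^[m] 0 := by
  have step : ∀ m, X ^ m ∣ Ψ^[m + 1] 0 - Ψ^[m] 0 := by
    intro m
    induction m with
    | zero => simp
    | succ m ih =>
      have h := hΨ (Ψ^[m + 1] 0) (Ψ^[m] 0)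
      rw [← Function.iterate_succ_apply' Ψ, ← Function.iterate_succ_apply' Ψ] at h
      rw [pow_succ']
      exact (mul_dvd_mul_left X ih).trans h
  have cauchy : ∀ m l, m ≤ l → X ^ m ∣ Ψ^[l] 0 - Ψ^[m] 0 := by
    intro m l hml
    induction l, hml using Nat.le_induction with
    | base => simp
    | succ l hml ih =>
      rw [← sub_add_sub_cancel]
      exact dvd_add ((pow_dvd_pow X hml).trans (step l)) ih
  set z : A⟦X⟧ := PowerSeries.mk fun i ↦ coeff i (Ψ^[i + 1] 0)
  have approx : ∀ m, X ^ m ∣ z - Ψ^[m] 0 := by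
    refine fun m ↦ X_pow_dvd_iff.2 fun i hi ↦ ?_
    rw [map_sub, coeff_mk, ← neg_sub, ← map_sub,
      X_pow_dvd_iff.1 (cauchy (i + 1) m hi) i i.lt_succ_self, neg_zero]
  refine ⟨z, sub_eq_zero.1 (PowerSeries.ext fun i ↦ ?_), approx⟩
  have h : X ^ (i + 1) ∣ Ψ z - z := by
    rw [← sub_sub_sub_cancel_right _ _ (Ψ^[i + 1] 0)]
    refine dvd_sub ?_ (approx _)
    rw [Function.iterate_succ_apply', pow_succ']
    exact (mul_dvd_mul_left X (approx i)).trans (hΨ _ _)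
  simpa using X_pow_dvd_iff.1 h i i.lt_succ_self

end PowerSeriesLemmas

section SlopeFiltration

open PowerSeries

variable {K σ : Type*} [CommRing K]

/-- The power series over a polynomial ring whose `i`-th coefficient has total degree at most
`d + c * i`. -/
def slopeFiltration (K σ : Type*) [CommRing K] (c d : ℕ) : Submodule K (MvPolynomial σ K)⟦X⟧ where
  carrier := {z | ∀ i, (coeff i z).totalDegree ≤ d + c * i}
  zero_mem' i := by simp
  add_mem' hu hv i := (MvPolynomial.totalDegree_add _ _).trans (max_le (hu i) (hv i))
  smul_mem' a u hu i := (MvPolynomial.totalDegree_smul_le a _).trans (hu i)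

namespace slopeFiltration

variable {c d d' : ℕ} {u v : (MvPolynomial σ K)⟦X⟧}

theorem mono (h : d ≤ d') (hu : u ∈ slopeFiltration K σ c d) : u ∈ slopeFiltration K σ c d' :=
  fun i ↦ (hu i).trans (Nat.add_le_add_right h _)

theorem C_mem {P : MvPolynomial σ K} (hP : P.totalDegree ≤ d) :
    C P ∈ slopeFiltration K σ c d := by
  intro i
  rw [coeff_C]
  split_ifs
  · omega
  · simp

theorem one_mem : (1 : (MvPolynomial σ K)⟦X⟧) ∈ slopeFiltration K σ c d := by
  rw [← map_one C]
  exact C_mem (by simp)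

theorem mul_mem (hu : u ∈ slopeFiltration K σ c d) (hv : v ∈ slopeFiltration K σ c d') :
    u * v ∈ slopeFiltration K σ c (d + d') := by
  intro i
  rw [coeff_mul]
  refine MvPolynomial.totalDegree_finsetSum_le fun ij hij ↦
    (MvPolynomial.totalDegree_mul _ _).trans ?_
  have h1 := hu ij.1
  have h2 := hv ij.2
  rw [← mem_antidiagonal.1 hij, mul_add]
  omega

theorem pow_mem (hu : u ∈ slopeFiltration K σ c d) (m : ℕ) :
    u ^ m ∈ slopeFiltration K σ c (m * d) := by
  induction m with
  | zero => simpa using one_mem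
  | succ m ih => simpa only [pow_succ, Nat.succ_mul] using mul_mem ih hu

theorem X_pow_mul_mem {m : ℕ} (hu : u ∈ slopeFiltration K σ c d) (h : d ≤ d' + c * m) :
    X ^ m * u ∈ slopeFiltration K σ c d' := by
  intro i
  rw [coeff_X_pow_mul']
  split_ifs with hmi
  · obtain ⟨i, rfl⟩ := Nat.exists_eq_add_of_le hmi
    have := hu i
    rw [Nat.add_sub_cancel_left, mul_add]
    omega
  · simp

theorem aeval_mem {z : σ → (MvPolynomial σ K)⟦X⟧} (hz : ∀ i, z i ∈ slopeFiltration K σ c 1)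
    (P : MvPolynomial σ K) : MvPolynomial.aeval z P ∈ slopeFiltration K σ c P.totalDegree := by
  rw [MvPolynomial.aeval_def, MvPolynomial.eval₂_eq]
  refine Submodule.sum_mem _ fun m hm ↦ ?_
  have hprod : ∀ s : Finset σ,
      ∏ i ∈ s, z i ^ m i ∈ slopeFiltration K σ c (∑ i ∈ s, m i) := by
    classical
    intro s
    induction s using Finset.induction_on with
    | empty => simpa using one_mem
    | insert i s his ih =>
      rw [prod_insert his, sum_insert his]
      simpa using mul_mem (pow_mem (hz i) (m i)) ih
  rw [← Algebra.smul_def]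
  refine Submodule.smul_mem _ _ fun i ↦ (hprod _ i).trans ?_
  gcongr
  exact MvPolynomial.le_totalDegree hm

end slopeFiltration

end SlopeFiltration

theorem pow_pow_eq_self {M : Type*} [Monoid M] {c : M} {q : ℕ} (hc : c ^ q = c) (j : ℕ) :
    c ^ q ^ j = c := by
  induction j with
  | zero => simp
  | succ j ih => rw [pow_succ, pow_mul, ih, hc]

/-- An additive polynomial `∑ j ≤ k, a j * z ^ q ^ j` over a field `K` of characteristic `p`, with
`q = p ^ e`, together with an index `t` that differs from its `q`-degree `k`. The coefficients
`a 0` and `a k` are nonzero; those of index above `k` are ignored. -/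
structure IndexedQPoly (K : Type*) [Field K] where
  /-- the characteristic -/
  p : ℕ
  /-- the exponent in `q = p ^ e` -/
  e : ℕ
  /-- the `q`-degree -/
  k : ℕ
  /-- the index -/
  t : ℕ
  /-- the coefficients -/
  a : ℕ → K
  prime_p : p.Prime
  charP : CharP K p
  e_pos : 0 < e
  k_pos : 0 < k
  t_pos : 0 < t
  k_ne_t : k ≠ t
  a_zero_ne : a 0 ≠ 0
  a_k_ne : a k ≠ 0

namespace IndexedQPoly

variable {K : Type*} [Field K] (D : IndexedQPoly K)

section Theta

variable {A B : Type*} [CommRing A] [Algebra K A] [CommRing B] [Algebra K B]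

/-- The order of the field over which the polynomial is linear. -/
def q : ℕ := D.p ^ D.e

/-- The degree of the polynomial, `q ^ k`. -/
def F : ℕ := D.q ^ D.k

/-- The degree of the monomial of index `t`. -/
def Q : ℕ := D.q ^ D.t

/-- The degree of `theta` in each of its two arguments. -/
def N : ℕ := D.q ^ max D.k D.t

/-- The additive map `z ↦ ∑ j ≤ k, a j * z ^ q ^ j` on a `K`-algebra. -/
def lin (z : A) : A := ∑ j ∈ range (D.k + 1), algebraMap K A (D.a j) * z ^ D.q ^ j

/-- The form whose zeros are the pairs `(x, y)` with proportional `(lin x, x ^ Q)` and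
`(lin y, y ^ Q)`, that is, the pairs lying in the kernel of a common `lin z - m * z ^ Q`. -/
def theta (x y : A) : A := D.lin x * y ^ D.Q - D.lin y * x ^ D.Q

theorem q_pow_eq (j : ℕ) : D.q ^ j = D.p ^ (D.e * j) := (pow_mul _ _ _).symm

theorem two_le_q : 2 ≤ D.q := D.prime_p.two_le.trans (Nat.le_self_pow D.e_pos.ne' _)

theorem q_pos : 0 < D.q := zero_lt_two.trans_le D.two_le_q

theorem q_pow_pos (j : ℕ) : 0 < D.q ^ j := Nat.pow_pos D.q_pos

theorem add_pow_q_pow (j : ℕ) (x y : A) :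
    (x + y) ^ D.q ^ j = x ^ D.q ^ j + y ^ D.q ^ j := by
  nontriviality A
  have := D.charP
  have := charP_of_injective_algebraMap (algebraMap K A).injective D.p
  have : Fact D.p.Prime := ⟨D.prime_p⟩
  rw [q_pow_eq, add_pow_char_pow]

theorem lin_add (x y : A) : D.lin (x + y) = D.lin x + D.lin y := by
  simp only [lin, add_pow_q_pow, mul_add, sum_add_distrib]

theorem lin_mul_of_pow_q {c : A} (hc : c ^ D.q = c) (x : A) : D.lin (c * x) = c * D.lin x := by
  simp only [lin, mul_pow, mul_sum, pow_pow_eq_self hc, mul_left_comm]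

theorem map_lin (φ : A →ₐ[K] B) (x : A) : φ (D.lin x) = D.lin (φ x) := by
  simp [lin]

theorem map_theta (φ : A →ₐ[K] B) (x y : A) : φ (D.theta x y) = D.theta (φ x) (φ y) := by
  simp [theta, map_lin]

theorem theta_self_mul {c : A} (hc : c ^ D.q = c) (x : A) : D.theta x (c * x) = 0 := by
  rw [theta, D.lin_mul_of_pow_q hc, mul_pow, Q, pow_pow_eq_self hc]
  ring

theorem theta_add_right (x y z : A) : D.theta x (y + z) = D.theta x y + D.theta x z := by
  rw [theta, theta, theta, lin_add, Q, add_pow_q_pow]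
  ring

theorem theta_sub_right (x y z : A) : D.theta x (y - z) = D.theta x y - D.theta x z := by
  rw [eq_sub_iff_add_eq, ← theta_add_right, sub_add_cancel]

/-- The cofactor in `lin z = z * linDiv z`. -/
def linDiv (z : A) : A := ∑ j ∈ range (D.k + 1), algebraMap K A (D.a j) * z ^ (D.q ^ j - 1)

theorem mul_linDiv (z : A) : z * D.linDiv z = D.lin z := by
  rw [linDiv, lin, mul_sum]
  refine sum_congr rfl fun j _ ↦ ?_
  rw [mul_left_comm, mul_pow_sub_one (D.q_pow_pos j).ne']

theorem map_linDiv (φ : A →ₐ[K] B) (x : A) : φ (D.linDiv x) = D.linDiv (φ x) := by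
  simp [linDiv]

theorem linDiv_zero : D.linDiv (0 : A) = algebraMap K A (D.a 0) := by
  rw [linDiv, sum_range_succ', sum_eq_zero]
  · simp
  · intro j _
    rw [zero_pow (Nat.sub_pos_of_lt (Nat.one_lt_pow j.succ_ne_zero D.two_le_q)).ne', mul_zero]

end Theta

theorem two_le_Q : 2 ≤ D.Q := D.two_le_q.trans (Nat.le_self_pow D.t_pos.ne' _)

theorem two_le_F : 2 ≤ D.F := D.two_le_q.trans (Nat.le_self_pow D.k_pos.ne' _)

theorem Q_le_N : D.Q ≤ D.N := Nat.pow_le_pow_right D.q_pos (le_max_right _ _)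

theorem F_le_N : D.F ≤ D.N := Nat.pow_le_pow_right D.q_pos (le_max_left _ _)

/-- The degree `N / q`, which bounds the smaller one of `F` and `Q`. -/
def N' : ℕ := D.q ^ (max D.k D.t - 1)

theorem N_eq : D.N = D.q * D.N' := by
  have := D.k_pos
  rw [N, N', ← pow_succ', Nat.sub_add_cancel (by omega)]

theorem q_le_N' : D.q ≤ D.N' := by
  have := D.k_pos
  have := D.t_pos
  have := D.k_ne_t
  exact Nat.le_self_pow (by omega) _

theorem max_min_F_Q : (D.F = D.N ∧ D.Q ≤ D.N') ∨ (D.Q = D.N ∧ D.F ≤ D.N') := by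
  rcases lt_or_gt_of_ne D.k_ne_t with h | h
  · refine .inr ⟨by rw [Q, N, max_eq_right h.le], Nat.pow_le_pow_right D.q_pos ?_⟩
    omega
  · refine .inl ⟨by rw [F, N, max_eq_left h.le], Nat.pow_le_pow_right D.q_pos ?_⟩
    omega

section Flow

open PowerSeries

variable {A B : Type*} [CommRing A] [Algebra K A] [CommRing B] [Algebra K B]

theorem mul_sub_dvd_linDiv_mul_sub (z u v : A) :
    z * (u - v) ∣
      D.linDiv (z * u) * u - D.linDiv (z * v) * v - algebraMap K A (D.a 0) * (u - v) := by
  have hterm : ∀ m, (z * u) ^ m * u - (z * v) ^ m * v = z ^ m * (u ^ (m + 1) - v ^ (m + 1)) :=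
    fun m ↦ by ring
  simp only [linDiv, sum_mul, ← sum_sub_distrib, mul_assoc, ← mul_sub, hterm]
  rw [sum_range_succ', pow_zero, Nat.sub_self, pow_zero, zero_add, pow_one, pow_one, one_mul,
    add_sub_cancel_right]
  refine dvd_sum fun j _ ↦ dvd_mul_of_dvd_right (mul_dvd_mul ?_ (sub_dvd_pow_sub_pow u v _)) _
  exact dvd_pow_self z (Nat.sub_pos_of_lt (Nat.one_lt_pow j.succ_ne_zero D.two_le_q)).ne'

theorem lin_C (z : A) : D.lin (C z) = C (D.lin z) := by
  simp [lin, PowerSeries.algebraMap_apply]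

theorem theta_C (x y : A) : D.theta (C x) (C y) = C (D.theta x y) := by
  simp [theta, lin_C]

/-- The displacement of `x` along the flow of `theta`, which moves `x` with velocity
`x ^ (Q + 2)`; the factor `x ^ Q` there makes the flow polynomial, since the partial derivative of
`theta` in its second argument is `-a 0 * x ^ Q`. -/
noncomputable def flowX (x : A) : A⟦X⟧ := C (x ^ (D.Q + 2)) * X

/-- The displacement of `y` along the flow of `theta`, in terms of an unknown series `ζ`. -/
noncomputable def flowY (x : A) (ζ : A⟦X⟧) : A⟦X⟧ := C (x ^ 2) * X * ζ

/-- The obstruction to `theta` being constant along the flow, see `theta_flow`. -/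
noncomputable def flowDefect (x y : A) (ζ : A⟦X⟧) : A⟦X⟧ :=
  C (D.lin x * x ^ (D.Q - 2)) * X ^ (D.Q - 1) * ζ ^ D.Q
    + D.linDiv (D.flowX x) * (C y ^ D.Q + flowY x ζ ^ D.Q)
    - C (D.lin y) * D.flowX x ^ (D.Q - 1)
    - D.linDiv (flowY x ζ) * ζ * (1 + C (x ^ ((D.Q + 1) * D.Q)) * X ^ D.Q)

theorem theta_flow (x y : A) (ζ : A⟦X⟧) :
    D.theta (C x + D.flowX x) (C y + flowY x ζ) =
      C (D.theta x y) + D.flowX x * D.flowDefect x y ζ := by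
  obtain ⟨m, hm⟩ : ∃ m, D.Q = m + 2 := Nat.exists_eq_add_of_le' D.two_le_Q
  have hlinX := D.mul_linDiv (D.flowX x)
  have hlinY := D.mul_linDiv (flowY x ζ)
  have hx := D.add_pow_q_pow D.t (C x) (D.flowX x)
  have hy := D.add_pow_q_pow D.t (C y) (flowY x ζ)
  rw [← Q] at hx hy
  rw [theta, lin_add, lin_add, hx, hy, ← hlinX, ← hlinY, ← theta_C, theta, lin_C, lin_C, flowDefect]
  generalize D.linDiv (D.flowX x) = r
  generalize D.linDiv (flowY x ζ) = s
  simp only [flowX, flowY, hm, map_mul, map_pow, Nat.add_sub_cancel,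
    show m + 2 - 1 = m + 1 from rfl]
  ring

theorem X_mul_sub_dvd_flowDefect_sub (x y : A) (u v : A⟦X⟧) :
    X * (u - v) ∣
      D.flowDefect x y u - D.flowDefect x y v + algebraMap K A⟦X⟧ (D.a 0) * (u - v) := by
  have hQ := D.two_le_Q
  have hpow : u - v ∣ u ^ D.Q - v ^ D.Q := sub_dvd_pow_sub_pow u v D.Q
  have hX : ∀ m, 0 < m → (X : A⟦X⟧) ∣ X ^ m := fun m hm ↦ dvd_pow_self X hm.ne'
  set g : A⟦X⟧ → A⟦X⟧ := fun ζ ↦ D.linDiv (flowY x ζ) * ζ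
  have hg : X * (u - v) ∣ g u - g v - algebraMap K A⟦X⟧ (D.a 0) * (u - v) :=
    (mul_dvd_mul_right (dvd_mul_left X (C (x ^ 2))) (u - v)).trans
      (D.mul_sub_dvd_linDiv_mul_sub _ u v)
  have hg' : u - v ∣ g u - g v :=
    (dvd_iff_dvd_of_dvd_sub ((dvd_mul_left _ _).trans hg)).2 (dvd_mul_left _ _)
  have heq : D.flowDefect x y u - D.flowDefect x y v + algebraMap K A⟦X⟧ (D.a 0) * (u - v) =
      C (D.lin x * x ^ (D.Q - 2)) * (X ^ (D.Q - 1) * (u ^ D.Q - v ^ D.Q))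
        + D.linDiv (D.flowX x) * C (x ^ 2) ^ D.Q * (X ^ D.Q * (u ^ D.Q - v ^ D.Q))
        - (g u - g v - algebraMap K A⟦X⟧ (D.a 0) * (u - v))
        - C (x ^ ((D.Q + 1) * D.Q)) * (X ^ D.Q * (g u - g v)) := by
    simp only [flowDefect, g, flowY]
    ring
  rw [heq]
  exact ((((mul_dvd_mul (hX _ (by omega)) hpow).mul_left _).add
    ((mul_dvd_mul (hX _ (by omega)) hpow).mul_left _)).sub hg).sub
    ((mul_dvd_mul (hX _ (by omega)) hg').mul_left _)

end Flow

section FormalFlow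

open PowerSeries

/-- The filtration of slope `N + 2`, which the flow of `theta` preserves. -/
abbrev flowFiltration (d : ℕ) : Submodule K K[X,Y]⟦X⟧ := slopeFiltration K (Fin 2) (D.N + 2) d

theorem F_add_N_add_sq_le : D.F + D.N + D.Q * D.Q ≤ 2 * D.Q + D.N * D.Q := by
  have hq := D.two_le_q
  have hN := D.N_eq
  have hQ := D.two_le_Q
  rcases D.max_min_F_Q with ⟨hF, hle⟩ | ⟨hQN, -⟩
  · rw [hF]
    nlinarith [Nat.mul_le_mul_right D.N' hq,
      Nat.mul_le_mul_right D.Q (Nat.mul_le_mul_right D.N' hq)]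
  · rw [hQN]
    nlinarith [D.F_le_N]

theorem totalDegree_lin_X_le (i : Fin 2) :
    (D.lin (MvPolynomial.X i : K[X,Y])).totalDegree ≤ D.F := by
  refine MvPolynomial.totalDegree_finsetSum_le fun j hj ↦ ?_
  rw [← Algebra.smul_def]
  refine (MvPolynomial.totalDegree_smul_le _ _).trans ?_
  rw [MvPolynomial.totalDegree_X_pow]
  exact Nat.pow_le_pow_right D.q_pos (mem_range_succ_iff.1 hj)

theorem totalDegree_lin_X_mul_X_pow_le (i : Fin 2) (m : ℕ) :
    (D.lin (MvPolynomial.X i : K[X,Y]) * MvPolynomial.X 0 ^ m).totalDegree ≤ D.F + m :=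
  (MvPolynomial.totalDegree_mul _ _).trans
    (add_le_add (D.totalDegree_lin_X_le i) (MvPolynomial.totalDegree_X_pow _ _).le)

variable {D}

theorem linDiv_mem_flowFiltration {u : K[X,Y]⟦X⟧} (hu : u ∈ D.flowFiltration 0) :
    D.linDiv u ∈ D.flowFiltration 0 := by
  refine Submodule.sum_mem _ fun j _ ↦ ?_
  rw [← Algebra.smul_def]
  exact Submodule.smul_mem _ _ (by simpa using slopeFiltration.pow_mem hu (D.q ^ j - 1))

theorem flowX_mem_flowFiltration : D.flowX (MvPolynomial.X 0 : K[X,Y]) ∈ D.flowFiltration 0 := by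
  rw [flowX, mul_comm, ← pow_one X]
  refine slopeFiltration.X_pow_mul_mem
    (slopeFiltration.C_mem (MvPolynomial.totalDegree_X_pow _ _).le) ?_
  have := D.Q_le_N
  omega

theorem flowY_mem_flowFiltration {ζ : K[X,Y]⟦X⟧} (hζ : ζ ∈ D.flowFiltration D.Q) :
    flowY (MvPolynomial.X 0) ζ ∈ D.flowFiltration 0 := by
  rw [flowY, mul_comm (C _), mul_assoc, ← pow_one X]
  refine slopeFiltration.X_pow_mul_mem (slopeFiltration.mul_mem
    (slopeFiltration.C_mem (MvPolynomial.totalDegree_X_pow _ _).le) hζ) ?_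
  have := D.Q_le_N
  omega

theorem C_X_pow_add_flowY_pow_mem {ζ : K[X,Y]⟦X⟧} (hζ : ζ ∈ D.flowFiltration D.Q) :
    C (MvPolynomial.X 1) ^ D.Q + flowY (MvPolynomial.X 0) ζ ^ D.Q ∈ D.flowFiltration D.Q := by
  refine Submodule.add_mem _ ?_ (slopeFiltration.mono (Nat.zero_le _)
    (slopeFiltration.pow_mem (flowY_mem_flowFiltration hζ) D.Q))
  rw [← map_pow]
  exact slopeFiltration.C_mem (MvPolynomial.totalDegree_X_pow _ _).le

theorem flowDefect_mem_flowFiltration {ζ : K[X,Y]⟦X⟧} (hζ : ζ ∈ D.flowFiltration D.Q) :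
    D.flowDefect (MvPolynomial.X 0) (MvPolynomial.X 1) ζ ∈ D.flowFiltration D.Q := by
  have hQ := D.two_le_Q
  have hQN := D.Q_le_N
  have hkey := D.F_add_N_add_sq_le
  obtain ⟨m, hm⟩ : ∃ m, D.Q = m + 2 := Nat.exists_eq_add_of_le' hQ
  have h₁ : C (D.lin (MvPolynomial.X 0) * MvPolynomial.X 0 ^ (D.Q - 2)) * X ^ (D.Q - 1) * ζ ^ D.Q
      ∈ D.flowFiltration D.Q := by
    rw [mul_right_comm, mul_comm]
    refine slopeFiltration.X_pow_mul_mem (slopeFiltration.mul_mem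
      (slopeFiltration.C_mem (D.totalDegree_lin_X_mul_X_pow_le 0 _))
      (slopeFiltration.pow_mem hζ _)) ?_
    rw [hm] at hkey ⊢
    simp only [Nat.add_sub_cancel, show m + 2 - 1 = m + 1 from rfl]
    nlinarith
  have h₂ : D.linDiv (D.flowX (MvPolynomial.X 0)) *
      (C (MvPolynomial.X 1) ^ D.Q + flowY (MvPolynomial.X 0) ζ ^ D.Q) ∈ D.flowFiltration D.Q := by
    simpa only [zero_add] using slopeFiltration.mul_mem
      (linDiv_mem_flowFiltration flowX_mem_flowFiltration) (C_X_pow_add_flowY_pow_mem hζ)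
  have h₃ : C (D.lin (MvPolynomial.X 1)) * D.flowX (MvPolynomial.X 0) ^ (D.Q - 1)
      ∈ D.flowFiltration D.Q := by
    rw [flowX, mul_pow, ← map_pow, ← mul_assoc, ← map_mul, mul_comm, ← pow_mul]
    refine slopeFiltration.X_pow_mul_mem (slopeFiltration.C_mem
      (D.totalDegree_lin_X_mul_X_pow_le 1 _)) ?_
    rw [hm] at hkey ⊢
    simp only [show m + 2 - 1 = m + 1 from rfl]
    nlinarith
  have h₄ : 1 + C (MvPolynomial.X 0 ^ ((D.Q + 1) * D.Q)) * X ^ D.Q ∈ D.flowFiltration 0 := by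
    refine Submodule.add_mem _ slopeFiltration.one_mem ?_
    rw [mul_comm]
    refine slopeFiltration.X_pow_mul_mem
      (slopeFiltration.C_mem (MvPolynomial.totalDegree_X_pow _ _).le) ?_
    nlinarith
  refine Submodule.sub_mem _ (Submodule.sub_mem _ (Submodule.add_mem _ h₁ h₂) h₃) ?_
  simpa using slopeFiltration.mul_mem (slopeFiltration.mul_mem
    (linDiv_mem_flowFiltration (flowY_mem_flowFiltration hζ)) hζ) h₄

variable (D)

theorem exists_flowDefect_eq_zero : ∃ ζ ∈ D.flowFiltration D.Q,
    D.flowDefect (MvPolynomial.X 0 : K[X,Y]) (MvPolynomial.X 1) ζ = 0 := by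
  set E : K[X,Y]⟦X⟧ → K[X,Y]⟦X⟧ := D.flowDefect (MvPolynomial.X 0) (MvPolynomial.X 1)
  set Ψ : K[X,Y]⟦X⟧ → K[X,Y]⟦X⟧ := fun ζ ↦ ζ + (D.a 0)⁻¹ • E ζ
  have hcontr : ∀ u v, X * (u - v) ∣ Ψ u - Ψ v := by
    intro u v
    have h := D.X_mul_sub_dvd_flowDefect_sub (MvPolynomial.X 0 : K[X,Y]) (MvPolynomial.X 1) u v
    convert h.mul_left (algebraMap K K[X,Y]⟦X⟧ (D.a 0)⁻¹) using 1
    rw [← Algebra.smul_def, ← Algebra.smul_def, smul_add, inv_smul_smul₀ D.a_zero_ne, smul_sub]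
    simp only [Ψ, E]
    abel
  obtain ⟨ζ, hfix, happrox⟩ := exists_isFixedPt_of_X_mul_sub_dvd Ψ hcontr
  have hiter : ∀ m, Ψ^[m] 0 ∈ D.flowFiltration D.Q := by
    intro m
    induction m with
    | zero => exact Submodule.zero_mem _
    | succ m ih =>
      rw [Function.iterate_succ_apply']
      exact Submodule.add_mem _ ih (Submodule.smul_mem _ _ (flowDefect_mem_flowFiltration ih))
  refine ⟨ζ, fun i ↦ ?_, ?_⟩
  · have h := X_pow_dvd_iff.1 (happrox (i + 1)) i i.lt_succ_self
    rw [map_sub, sub_eq_zero] at h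
    rw [h]
    exact hiter _ i
  · have h := add_eq_left.1 hfix
    rwa [smul_eq_zero_iff_right (inv_ne_zero D.a_zero_ne)] at h

/-- The series `ζ` for which the flow of `theta` through the generic point is defined. -/
noncomputable def flowSeries : K[X,Y]⟦X⟧ := D.exists_flowDefect_eq_zero.choose

theorem flowSeries_mem : D.flowSeries ∈ D.flowFiltration D.Q :=
  D.exists_flowDefect_eq_zero.choose_spec.1

theorem flowDefect_flowSeries :
    D.flowDefect (MvPolynomial.X 0 : K[X,Y]) (MvPolynomial.X 1) D.flowSeries = 0 :=
  D.exists_flowDefect_eq_zero.choose_spec.2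

/-- The formal flow of a vector field tangent to the level curves of `theta`. Its `j`-th coefficient
is the polynomial form of the `j`-th Hasse derivative along the curve, multiplied by
`x ^ ((Q + 2) * j)`. -/
noncomputable def flow : K[X,Y] →ₐ[K] K[X,Y]⟦X⟧ :=
  MvPolynomial.aeval ![C (MvPolynomial.X 0) + D.flowX (MvPolynomial.X 0),
    C (MvPolynomial.X 1) + flowY (MvPolynomial.X 0) D.flowSeries]

theorem flow_X_zero :
    D.flow (MvPolynomial.X 0) = C (MvPolynomial.X 0) + D.flowX (MvPolynomial.X 0) := by
  simp [flow]

theorem flow_X_one :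
    D.flow (MvPolynomial.X 1) =
      C (MvPolynomial.X 1) + flowY (MvPolynomial.X 0) D.flowSeries := by
  simp [flow]

theorem flow_theta : D.flow (D.theta (MvPolynomial.X 0) (MvPolynomial.X 1)) =
    C (D.theta (MvPolynomial.X 0) (MvPolynomial.X 1)) := by
  rw [map_theta, flow_X_zero, flow_X_one, theta_flow, flowDefect_flowSeries, mul_zero, add_zero]

theorem constantCoeff_flow (P : K[X,Y]) : constantCoeff (D.flow P) = P := by
  have h : (constantCoeff (R := K[X,Y])).comp (D.flow : K[X,Y] →+* K[X,Y]⟦X⟧) =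
      RingHom.id K[X,Y] := by
    refine MvPolynomial.ringHom_ext (fun c ↦ ?_) fun i ↦ ?_
    · simp [flow, PowerSeries.algebraMap_apply, ← MvPolynomial.algebraMap_eq]
    · fin_cases i
      · simp [flow_X_zero, flowX]
      · simp [flow_X_one, flowY]
  exact RingHom.congr_fun h P

theorem totalDegree_coeff_flow_le (P : K[X,Y]) (j : ℕ) :
    (coeff j (D.flow P)).totalDegree ≤ P.totalDegree + (D.N + 2) * j := by
  refine slopeFiltration.aeval_mem (fun i ↦ ?_) P j
  fin_cases i
  · exact Submodule.add_mem _ (slopeFiltration.C_mem (MvPolynomial.totalDegree_X _).le)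
      (slopeFiltration.mono (Nat.zero_le 1) flowX_mem_flowFiltration)
  · exact Submodule.add_mem _ (slopeFiltration.C_mem (MvPolynomial.totalDegree_X _).le)
      (slopeFiltration.mono (Nat.zero_le 1) (flowY_mem_flowFiltration D.flowSeries_mem))

end FormalFlow

end IndexedQPoly

section NilpotentEvaluation

open PowerSeries

variable {K A B : Type*} [CommRing K] [CommRing A] [Algebra K A] [CommRing B] [Algebra K B]

/-- The evaluation of power series at a nilpotent element `s`. -/
noncomputable def evalNilpotent (φ : A →ₐ[K] B) {s : B} {m : ℕ} (hs : s ^ m = 0) :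
    A⟦X⟧ →ₐ[K] B where
  toFun f := (trunc m f).eval₂ φ s
  map_zero' := by simp
  map_add' f g := by simp
  map_one' := by
    cases m with
    | zero => simpa [eq_comm] using hs
    | succ m => simp [trunc_one]
  map_mul' f g := by
    have h : Polynomial.X ^ m ∣ trunc m (f * g) - trunc m f * trunc m g := by
      refine Polynomial.X_pow_dvd_iff.2 fun i hi ↦ ?_
      rw [Polynomial.coeff_sub, coeff_trunc, if_pos hi, coeff_mul_eq_coeff_trunc_mul_trunc f g hi,
        ← Polynomial.coe_mul, Polynomial.coeff_coe, sub_self]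
    have h' := map_dvd (Polynomial.eval₂RingHom (φ : A →+* B) s) h
    simpa [hs, sub_eq_zero] using h'
  commutes' c := by
    cases m with
    | zero =>
      have : Subsingleton B := subsingleton_of_zero_eq_one (by simpa [eq_comm] using hs)
      exact Subsingleton.elim _ _
    | succ m => simp [PowerSeries.algebraMap_apply, trunc_C]

theorem evalNilpotent_apply (φ : A →ₐ[K] B) {s : B} {m : ℕ} (hs : s ^ m = 0) (f : A⟦X⟧) :
    evalNilpotent φ hs f = ∑ j ∈ range m, φ (coeff j f) * s ^ j :=
  eval₂_trunc_eq_sum_range _ _ _ _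

theorem evalNilpotent_C (φ : A →ₐ[K] B) {s : B} {m : ℕ} (hs : s ^ m = 0) (c : A) :
    evalNilpotent φ hs (C c) = φ c := by
  cases m with
  | zero =>
    have : Subsingleton B := subsingleton_of_zero_eq_one (by simpa [eq_comm] using hs)
    exact Subsingleton.elim _ _
  | succ m => simp [evalNilpotent, trunc_C]

theorem evalNilpotent_X (φ : A →ₐ[K] B) {s : B} {m : ℕ} (hs : s ^ m = 0) :
    evalNilpotent φ hs X = s := by
  match m, hs with
  | 0, hs =>
    have : Subsingleton B := subsingleton_of_zero_eq_one (by simpa [eq_comm] using hs)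
    exact Subsingleton.elim _ _
  | 1, hs => simpa [evalNilpotent_apply, eq_comm] using hs
  | m + 2, hs =>
    rw [evalNilpotent_apply, sum_range_succ', sum_range_succ', sum_eq_zero fun j _ ↦ ?_]
    · simp
    · simp [coeff_X]

/-- The constant coefficient as a homomorphism of algebras over a ring of scalars. -/
noncomputable def constantCoeffHom (K A : Type*) [CommRing K] [CommRing A] [Algebra K A] :
    A⟦X⟧ →ₐ[K] A where
  __ := constantCoeff (R := A)
  commutes' c := by simp [PowerSeries.algebraMap_apply]

theorem constantCoeffHom_apply (f : A⟦X⟧) : constantCoeffHom K A f = constantCoeff f := rfl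

end NilpotentEvaluation

namespace IndexedQPoly

variable {K : Type*} [Field K] (D : IndexedQPoly K)

section Branch

open PowerSeries

/-- The polynomial whose zero locus is the curve under study. -/
noncomputable def curve : K[X,Y] := D.theta (MvPolynomial.X 0) (MvPolynomial.X 1)

variable {L : Type*} [Field L] [Algebra K L]

/-- A formal branch of `curve` over the point `x₁` of the first coordinate line, parametrised by
`x - x₁` and encoded by the pullback of polynomials. -/
structure IsBranch (ψ : K[X,Y] →ₐ[K] L⟦X⟧) (x₁ : L) : Prop where
  map_X_zero : ψ (MvPolynomial.X 0) = C x₁ + X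
  map_curve : ψ D.curve = 0

theorem constantCoeff_theta (x y : L⟦X⟧) :
    constantCoeff (D.theta x y) = D.theta (constantCoeff x) (constantCoeff y) :=
  D.map_theta (constantCoeffHom K L) x y

theorem X_pow_dvd_of_X_pow_dvd_theta {x w : L⟦X⟧} (hx : constantCoeff x ≠ 0) (hw : X ∣ w) {M : ℕ}
    (h : X ^ M ∣ D.theta x w) : X ^ M ∣ w := by
  set u : L⟦X⟧ := D.lin x * w ^ (D.Q - 1) - D.linDiv w * x ^ D.Q
  have hfactor : D.theta x w = w * u := by
    have hQ := D.two_le_Q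
    rw [theta, ← D.mul_linDiv w, ← mul_pow_sub_one (by omega : D.Q ≠ 0) w]
    ring
  have hw0 : constantCoeff w = 0 := X_dvd_iff.1 hw
  have hlinDiv : constantCoeff (D.linDiv w) = algebraMap K L (D.a 0) := by
    have := D.map_linDiv (constantCoeffHom K L) w
    rwa [constantCoeffHom_apply, constantCoeffHom_apply, hw0, linDiv_zero] at this
  have hunit : IsUnit u := by
    have hQ := D.two_le_Q
    rw [isUnit_iff_constantCoeff, isUnit_iff_ne_zero, map_sub, map_mul, map_mul, map_pow, map_pow,
      hw0, hlinDiv, zero_pow (by omega), mul_zero, zero_sub, neg_ne_zero]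
    exact mul_ne_zero ((map_ne_zero _).2 D.a_zero_ne) (pow_ne_zero _ hx)
  rwa [hfactor, hunit.dvd_mul_right] at h

theorem exists_isBranch {x₁ y₁ : L} (hx₁ : x₁ ≠ 0) (h : D.theta x₁ y₁ = 0) :
    ∃ ψ : K[X,Y] →ₐ[K] L⟦X⟧, D.IsBranch ψ x₁ ∧ constantCoeff (ψ (MvPolynomial.X 1)) = y₁ := by
  set pt : K[X,Y] →ₐ[K] L := MvPolynomial.aeval ![x₁, y₁]
  have hpow : x₁ ^ (D.Q + 2) ≠ 0 := pow_ne_zero _ hx₁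
  have hX0 : pt (MvPolynomial.X 0) = x₁ := by simp [pt]
  have hX1 : pt (MvPolynomial.X 1) = y₁ := by simp [pt]
  let ψ : K[X,Y] →ₐ[K] L⟦X⟧ :=
    ((rescaleAlgHom (R := L) (x₁ ^ (D.Q + 2))⁻¹).restrictScalars K).comp
      ((PowerSeries.mapAlgHom pt).comp D.flow)
  have hψ : ∀ P, ψ P =
      rescale (x₁ ^ (D.Q + 2))⁻¹ (PowerSeries.map (pt : K[X,Y] →+* L) (D.flow P)) :=
    fun P ↦ RingHom.congr_fun (coe_rescaleAlgHom _) _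
  have hC : ∀ c, rescale (x₁ ^ (D.Q + 2))⁻¹ (C c) = C c := fun c ↦ by
    ext i
    rw [coeff_rescale, coeff_C]
    split_ifs with hi <;> simp [hi]
  refine ⟨ψ, ⟨?_, ?_⟩, ?_⟩
  · rw [hψ, flow_X_zero, flowX, map_add, map_add, map_mul, map_mul, map_C, map_C, map_X, hC, hC,
      rescale_X, RingHom.coe_coe, map_pow, hX0, ← mul_assoc, ← map_mul,
      mul_inv_cancel₀ hpow, map_one, one_mul]
  · rw [hψ, curve, flow_theta, map_C, hC, RingHom.coe_coe, map_theta, hX0, hX1, h, map_zero]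
  · rw [hψ, ← coeff_zero_eq_constantCoeff_apply, coeff_rescale, pow_zero, one_mul, coeff_map,
      coeff_zero_eq_constantCoeff_apply, constantCoeff_flow, RingHom.coe_coe, hX1]

section

variable {B : Type*} [CommRing B] [Algebra K B] (φ : K[X,Y] →ₐ[K] B) {σ : B} {m : ℕ}

theorem evalNilpotent_flow_X_zero (hσ : σ ^ m = 0) :
    evalNilpotent φ hσ (D.flow (MvPolynomial.X 0)) =
      φ (MvPolynomial.X 0) + φ (MvPolynomial.X 0) ^ (D.Q + 2) * σ := by
  rw [flow_X_zero, flowX, map_add, map_mul, evalNilpotent_C, evalNilpotent_C, evalNilpotent_X,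
    map_pow]

theorem evalNilpotent_flow_curve (hσ : σ ^ m = 0) :
    evalNilpotent φ hσ (D.flow D.curve) = φ D.curve := by
  rw [curve, flow_theta, evalNilpotent_C]

end

variable {D}
variable {ψ : K[X,Y] →ₐ[K] L⟦X⟧} {x₁ : L}

namespace IsBranch

theorem theta_map_X (hψ : D.IsBranch ψ x₁) :
    D.theta (C x₁ + X) (ψ (MvPolynomial.X 1)) = 0 := by
  rw [← hψ.map_X_zero, ← map_theta, ← curve, hψ.map_curve]

theorem theta_constantCoeff (hψ : D.IsBranch ψ x₁) :
    D.theta x₁ (constantCoeff (ψ (MvPolynomial.X 1))) = 0 := by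
  have h := D.constantCoeff_theta (C x₁ + X) (ψ (MvPolynomial.X 1))
  rwa [hψ.theta_map_X, map_zero, map_add, constantCoeff_C, constantCoeff_X, add_zero, eq_comm] at h

/-- The line `y = c * x` is a branch through the same point, and the branch through a point over
`x₁ ≠ 0` is unique. -/
theorem map_X_one_eq (hψ : D.IsBranch ψ x₁) (hx₁ : x₁ ≠ 0) {c : K} (hc : c ^ D.q = c)
    (h : constantCoeff (ψ (MvPolynomial.X 1)) = algebraMap K L c * x₁) :
    ψ (MvPolynomial.X 1) = algebraMap K L⟦X⟧ c * ψ (MvPolynomial.X 0) := by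
  have hc' : algebraMap K L⟦X⟧ c ^ D.q = algebraMap K L⟦X⟧ c := by rw [← map_pow, hc]
  rw [hψ.map_X_zero, ← sub_eq_zero]
  set w := ψ (MvPolynomial.X 1) - algebraMap K L⟦X⟧ c * (C x₁ + X)
  have htheta : D.theta (C x₁ + X) w = 0 := by
    rw [theta_sub_right, hψ.theta_map_X, theta_self_mul _ hc', sub_zero]
  have hw : X ∣ w := X_dvd_iff.2 (by simp [w, h, PowerSeries.algebraMap_apply])
  ext i
  refine X_pow_dvd_iff.1 (D.X_pow_dvd_of_X_pow_dvd_theta (x := C x₁ + X) (M := i + 1) ?_ hw ?_)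
    i i.lt_succ_self
  · simpa using hx₁
  · rw [htheta]
    exact dvd_zero _

/-- Flowing along the branch for the time `s * x ^ (-(Q + 2))`, where `s = x₁ - x` up to
`X ^ (i + 1)`, leads back to its base point. -/
theorem X_pow_dvd_sum_flow_sub (hψ : D.IsBranch ψ x₁) (hx₁ : x₁ ≠ 0) (P : K[X,Y]) {i : ℕ} {s : L⟦X⟧}
    (hs : X ^ (i + 1) ∣ s + X) (hsX : X ∣ s) :
    X ^ (i + 1) ∣ ∑ j ∈ range (i + 1), ψ (coeff j (D.flow P)) * (s * (C x₁ + X)⁻¹ ^ (D.Q + 2)) ^ j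
      - C (constantCoeff (ψ P)) := by
  set x : L⟦X⟧ := C x₁ + X
  have hx : constantCoeff x ≠ 0 := by simpa [x] using hx₁
  set σ : L⟦X⟧ := s * x⁻¹ ^ (D.Q + 2)
  have hσ : constantCoeff σ = 0 := X_dvd_iff.1 (hsX.mul_right _)
  set I : Ideal L⟦X⟧ := Ideal.span {X ^ (i + 1)}
  set π : L⟦X⟧ →ₐ[K] L⟦X⟧ ⧸ I := Ideal.Quotient.mkₐ K I
  have hπ : ∀ u v, π u = π v ↔ X ^ (i + 1) ∣ u - v := fun u v ↦ by
    rw [← Ideal.mem_span_singleton, ← Ideal.Quotient.eq]; rfl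
  have hnil : π σ ^ (i + 1) = 0 := by
    rw [← map_pow, ← map_zero π, hπ, sub_zero]
    exact pow_dvd_pow_of_dvd (hsX.mul_right _) _
  set χ : K[X,Y] →ₐ[K] L⟦X⟧ ⧸ I := (evalNilpotent (π.comp ψ) hnil).comp D.flow
  set base : K[X,Y] →ₐ[K] L⟦X⟧ ⧸ I :=
    π.comp (((Algebra.ofId L L⟦X⟧).restrictScalars K).comp ((constantCoeffHom K L).comp ψ))
  have hbase : ∀ P, base P = π (C (constantCoeff (ψ P))) := fun _ ↦ rfl
  have hX0 : χ (MvPolynomial.X 0) = π (C x₁) := by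
    have hsx : x ^ (D.Q + 2) * σ = s := by
      rw [mul_left_comm, ← mul_pow, PowerSeries.mul_inv_cancel _ hx, one_pow, mul_one]
    rw [AlgHom.comp_apply, evalNilpotent_flow_X_zero, AlgHom.comp_apply, hψ.map_X_zero, ← map_pow,
      ← map_mul, hsx, ← map_add, hπ]
    convert hs using 1
    ring
  have hcurve : χ D.curve = 0 := by
    rw [AlgHom.comp_apply, evalNilpotent_flow_curve, AlgHom.comp_apply, hψ.map_curve, map_zero]
  have hX1 : χ (MvPolynomial.X 1) = π (C (constantCoeff (ψ (MvPolynomial.X 1)))) := by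
    set y := ∑ j ∈ range (i + 1), ψ (coeff j (D.flow (MvPolynomial.X 1))) * σ ^ j
    have hy : π y = χ (MvPolynomial.X 1) := by simp [y, χ, evalNilpotent_apply]
    rw [← hy, hπ]
    refine D.X_pow_dvd_of_X_pow_dvd_theta (x := C x₁) (by simpa using hx₁) ?_ ?_
    · rw [X_dvd_iff, map_sub, constantCoeff_C, sub_eq_zero, map_sum, sum_range_succ',
        sum_eq_zero fun j _ ↦ by rw [map_mul, map_pow, hσ, pow_succ, mul_zero, mul_zero]]
      simp [constantCoeff_flow]
    · rw [theta_sub_right, theta_C, hψ.theta_constantCoeff, map_zero, sub_zero, ← sub_zero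
        (D.theta _ _), ← hπ, map_zero, map_theta, hy, ← hX0, ← map_theta, ← curve, hcurve]
  have hχ : χ = base := by
    refine MvPolynomial.algHom_ext fun l ↦ ?_
    fin_cases l
    · simp [hX0, hbase, hψ.map_X_zero]
    · simp [hX1, hbase]
  rw [← hπ, ← hbase, ← hχ]
  simp [χ, evalNilpotent_apply]

end IsBranch

end Branch

section DividedDifference

open Polynomial

variable {A B : Type*} [CommRing A] [Algebra K A] [CommRing B] [Algebra K B]

/-- `theta x Y` as a polynomial in `Y`. -/
noncomputable def thetaPoly (x : A) : A[X] := D.theta (C x) X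

/-- The divided difference `(theta x Y - theta x y) / (Y - y)` as a polynomial in `Y`. -/
noncomputable def thetaSlope (x y : A) : A[X] := D.thetaPoly x /ₘ (X - C y)

theorem lin_poly_C (x : A) : D.lin (C x) = C (D.lin x) := by
  simp [lin, Polynomial.algebraMap_apply]

theorem thetaPoly_eq (x : A) :
    D.thetaPoly x = C (D.lin x) * X ^ D.Q
      - ∑ j ∈ range (D.k + 1), C (algebraMap K A (D.a j) * x ^ D.Q) * X ^ D.q ^ j := by
  have h : D.lin (X : A[X]) * C x ^ D.Q =
      ∑ j ∈ range (D.k + 1), C (algebraMap K A (D.a j) * x ^ D.Q) * X ^ D.q ^ j := by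
    rw [lin, sum_mul]
    refine sum_congr rfl fun j _ ↦ ?_
    rw [Polynomial.algebraMap_apply, map_mul, map_pow]
    ring
  rw [thetaPoly, theta, lin_poly_C, h]

theorem eval_thetaPoly (x y : A) : (D.thetaPoly x).eval y = D.theta x y := by
  simp [thetaPoly_eq, theta, lin, eval_finsetSum, sum_mul, mul_right_comm]

theorem map_thetaPoly (φ : A →ₐ[K] B) (x : A) :
    (D.thetaPoly x).map (φ : A →+* B) = D.thetaPoly (φ x) := by
  simp [thetaPoly_eq, Polynomial.map_sum, map_lin]

theorem natDegree_thetaPoly_le (x : A) : (D.thetaPoly x).natDegree ≤ D.N := by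
  rw [thetaPoly_eq]
  refine (natDegree_sub_le _ _).trans (max_le ((natDegree_C_mul_X_pow_le _ _).trans D.Q_le_N) ?_)
  refine natDegree_sum_le_of_forall_le _ _ fun j hj ↦ (natDegree_C_mul_X_pow_le _ _).trans ?_
  exact (Nat.pow_le_pow_right D.q_pos (mem_range_succ_iff.1 hj)).trans D.F_le_N

theorem derivative_thetaPoly (x : A) :
    derivative (D.thetaPoly x) = C (-(algebraMap K A (D.a 0) * x ^ D.Q)) := by
  nontriviality A
  have := D.charP
  have := charP_of_injective_algebraMap (algebraMap K A).injective D.p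
  have hcast : ∀ j, j ≠ 0 → ((D.q ^ j : ℕ) : A) = 0 := fun j hj ↦ by
    rw [CharP.cast_eq_zero_iff A D.p, q_pow_eq]
    exact dvd_pow_self _ (mul_ne_zero D.e_pos.ne' hj)
  rw [thetaPoly_eq, derivative_sub, derivative_sum, sum_range_succ']
  simp only [derivative_C_mul_X_pow]
  simp [Q, hcast, D.t_pos.ne']

theorem X_sub_C_mul_thetaSlope (x y : A) :
    (X - C y) * D.thetaSlope x y = D.thetaPoly x - C (D.theta x y) := by
  rw [eq_sub_iff_add_eq, add_comm, ← eval_thetaPoly, ← modByMonic_X_sub_C_eq_C_eval]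
  exact modByMonic_add_div _ _

theorem map_thetaSlope (φ : A →ₐ[K] B) (x y : A) :
    (D.thetaSlope x y).map (φ : A →+* B) = D.thetaSlope (φ x) (φ y) := by
  rw [thetaSlope, map_divByMonic _ (monic_X_sub_C y), map_thetaPoly]
  simp [thetaSlope]

theorem natDegree_thetaSlope_lt (x y : A) : (D.thetaSlope x y).natDegree < D.N := by
  have hN : 0 < D.N := D.q_pow_pos _
  rcases subsingleton_or_nontrivial A with _ | _
  · simpa [natDegree_of_subsingleton] using hN
  · rw [thetaSlope, natDegree_divByMonic _ (monic_X_sub_C y), natDegree_X_sub_C]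
    have := D.natDegree_thetaPoly_le x
    omega

theorem eval_thetaSlope_self (x y : A) :
    (D.thetaSlope x y).eval y = -(algebraMap K A (D.a 0) * x ^ D.Q) := by
  have h := congr_arg (fun P ↦ (derivative P).eval y) (D.X_sub_C_mul_thetaSlope x y)
  simpa [derivative_thetaPoly] using h

theorem eval_thetaSlope_eq_zero [IsDomain A] {x y z : A} (hyz : z ≠ y) (hy : D.theta x y = 0)
    (hz : D.theta x z = 0) : (D.thetaSlope x y).eval z = 0 := by
  have h := congr_arg (eval z) (D.X_sub_C_mul_thetaSlope x y)
  rw [eval_mul, eval_sub, eval_sub, eval_thetaPoly, hy, hz] at h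
  simpa [sub_ne_zero.2 hyz] using h

theorem totalDegree_coeff_thetaPoly_le (i : ℕ) :
    ((D.thetaPoly (MvPolynomial.X 0 : K[X,Y])).coeff i).totalDegree ≤ D.F + D.Q - i := by
  rw [thetaPoly_eq, coeff_sub, coeff_C_mul_X_pow, finsetSum_coeff]
  refine (MvPolynomial.totalDegree_sub _ _).trans (max_le ?_ ?_)
  · split_ifs with hi
    · have := D.totalDegree_lin_X_le 0
      omega
    · simp
  · refine MvPolynomial.totalDegree_finsetSum_le fun j hj ↦ ?_
    rw [coeff_C_mul_X_pow, ← Algebra.smul_def]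
    split_ifs with hi
    · have hF : D.q ^ j ≤ D.F := Nat.pow_le_pow_right D.q_pos (mem_range_succ_iff.1 hj)
      refine (MvPolynomial.totalDegree_smul_le _ _).trans ?_
      rw [MvPolynomial.totalDegree_X_pow]
      omega
    · simp

theorem totalDegree_coeff_thetaSlope_le (b : ℕ) :
    ((D.thetaSlope (MvPolynomial.X 0 : K[X,Y]) (MvPolynomial.X 1)).coeff b).totalDegree
      ≤ D.F + D.Q - 1 := by
  rw [thetaSlope, coeff_divByMonic_X_sub_C]
  refine MvPolynomial.totalDegree_finsetSum_le fun i hi ↦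
    (MvPolynomial.totalDegree_mul _ _).trans ?_
  rw [MvPolynomial.totalDegree_X_pow]
  have hcoeff := D.totalDegree_coeff_thetaPoly_le i
  have hi' := mem_Icc.1 hi
  have hdeg := D.natDegree_thetaPoly_le (MvPolynomial.X 0 : K[X,Y])
  rcases D.max_min_F_Q with h | h <;> omega

end DividedDifference

end IndexedQPoly

section FrobeniusPairs

open PowerSeries

variable {K : Type*} [Field K] [Fintype K]

theorem sub_C_constantCoeff_pow_card {L : Type*} [Field L] [Algebra K L] (w : L⟦X⟧) :
    (w - C (constantCoeff w)) ^ Fintype.card K =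
      w ^ Fintype.card K - C (constantCoeff w ^ Fintype.card K) := by
  have h := map_sub (FiniteField.frobeniusAlgHom K L⟦X⟧) w (C (constantCoeff w))
  simpa only [FiniteField.frobeniusAlgHom_apply, ← map_pow] using h

theorem X_pow_card_dvd_pow_card_sub {L : Type*} [Field L] [Algebra K L] (w : L⟦X⟧) :
    X ^ Fintype.card K ∣ w ^ Fintype.card K - C (constantCoeff w ^ Fintype.card K) := by
  rw [← sub_C_constantCoeff_pow_card]
  exact pow_dvd_pow_of_dvd (X_dvd_iff.2 (by simp)) _

/-- The pairs `(∑ c * w ^ |K|, ∑ c * w)` with each `c` in a given space `V` of power series. -/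
def frobeniusPairs (V : Submodule K K⟦X⟧) : Submodule K (K⟦X⟧ × K⟦X⟧) :=
  Submodule.span K {z | ∃ c ∈ V, ∃ w, z = (c * w ^ Fintype.card K, c * w)}

namespace frobeniusPairs

variable {V : Submodule K K⟦X⟧}

theorem mk_mem {c : K⟦X⟧} (hc : c ∈ V) (w : K⟦X⟧) :
    (c * w ^ Fintype.card K, c * w) ∈ frobeniusPairs V :=
  Submodule.subset_span ⟨c, hc, w, rfl⟩

theorem exists_eq_add_X_mul {z : K⟦X⟧ × K⟦X⟧} (hz : z ∈ frobeniusPairs V) :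
    ∃ u ∈ V, ∃ z' ∈ frobeniusPairs V, z = (u + X ^ Fintype.card K * z'.1, u + X * z'.2) := by
  induction hz using Submodule.span_induction with
  | mem z hz =>
    obtain ⟨c, hc, w, rfl⟩ := hz
    obtain ⟨w', hw'⟩ : X ∣ w - C (constantCoeff w) := X_dvd_iff.2 (by simp)
    have hw : w = C (constantCoeff w) + X * w' := by rw [← hw', add_sub_cancel]
    have hpow : w ^ Fintype.card K =
        C (constantCoeff w) + X ^ Fintype.card K * w' ^ Fintype.card K := by
      rw [← mul_pow, ← hw', sub_C_constantCoeff_pow_card, FiniteField.pow_card, add_sub_cancel]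
    refine ⟨constantCoeff w • c, V.smul_mem _ hc, _, mk_mem hc w', ?_⟩
    rw [hpow, smul_eq_C_mul, Prod.mk.injEq]
    refine ⟨by ring, ?_⟩
    conv_lhs => rw [hw]
    ring
  | zero => exact ⟨0, V.zero_mem, 0, Submodule.zero_mem _, by simp [Prod.zero_eq_mk]⟩
  | add y z _ _ hy hz =>
    obtain ⟨u, hu, y', hy', rfl⟩ := hy
    obtain ⟨v, hv, z', hz', rfl⟩ := hz
    refine ⟨u + v, V.add_mem hu hv, y' + z', Submodule.add_mem _ hy' hz', ?_⟩
    simp only [Prod.mk_add_mk, Prod.fst_add, Prod.snd_add, mul_add, add_add_add_comm]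
  | smul a z _ hz =>
    obtain ⟨u, hu, z', hz', rfl⟩ := hz
    exact ⟨a • u, V.smul_mem _ hu, a • z', Submodule.smul_mem _ _ hz', by simp [smul_add]⟩

theorem eq_zero_of_mem (hV : ∀ u ∈ V, X ^ Fintype.card K ∣ u → u = 0) {w : K⟦X⟧}
    (hw : (0, w) ∈ frobeniusPairs V) : w = 0 := by
  have hdvd : ∀ m w, (0, w) ∈ frobeniusPairs V → X ^ m ∣ w := by
    intro m
    induction m with
    | zero => simp
    | succ m ih =>
      intro w hw
      obtain ⟨u, hu, ⟨z₁, z₂⟩, hz, h⟩ := exists_eq_add_X_mul hw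
      obtain ⟨h₁, rfl⟩ := Prod.mk.inj h
      obtain rfl : u = 0 := hV u hu ⟨-z₁, by linear_combination -h₁⟩
      obtain rfl : z₁ = 0 := by simpa [eq_comm (a := (0 : K⟦X⟧))] using h₁
      rw [zero_add, pow_succ']
      exact mul_dvd_mul_left X (ih z₂ hz)
  ext i
  exact X_pow_dvd_iff.1 (hdvd (i + 1) w hw) i i.lt_succ_self

theorem mul_sub_pow_mem {x : K⟦X⟧} {m : ℕ} {c : K⟦X⟧} (hc : ∀ i ≤ m, c * x ^ i ∈ V) (w : K⟦X⟧) :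
    (c * (x ^ Fintype.card K - x) ^ m * w ^ Fintype.card K, c * 0 ^ m * w) ∈ frobeniusPairs V := by
  induction m generalizing c w with
  | zero => simpa using mk_mem (by simpa using hc 0 le_rfl) w
  | succ m ih =>
    have h := Submodule.sub_mem _ (ih (fun i hi ↦ hc i (by omega)) (x * w))
      (ih (c := c * x) (fun i hi ↦ by
        simpa only [mul_assoc, ← pow_succ'] using hc (i + 1) (by omega)) w)
    convert h using 1
    rw [Prod.mk_sub_mk, Prod.mk.injEq]
    exact ⟨by ring, by ring⟩

end frobeniusPairs

end FrobeniusPairs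

namespace IndexedQPoly

variable {K : Type*} [Field K] (D : IndexedQPoly K)

section AuxiliaryPolynomial

open PowerSeries

/-- The coefficient of `Y ^ b` in the divided difference `thetaSlope`, translated along the flow:
its `j`-th Taylor coefficient. -/
noncomputable def slopeCoeff (b j : ℕ) : K[X,Y] :=
  coeff j (D.flow ((D.thetaSlope (MvPolynomial.X 0 : K[X,Y]) (MvPolynomial.X 1)).coeff b))

/-- The coefficient of `(X ^ κ - X) ^ (i - l) * X ^ ((Q + 2) * l)` in the auxiliary polynomial
attached to `v`; see `sum_auxTerm`. -/
noncomputable def auxCoeff (v : ℕ → K[X,Y]) (i b l : ℕ) : K[X,Y] :=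
  ∑ j ∈ Ico l (i + 1), v j * D.slopeCoeff b (j - l)

/-- The terms of the auxiliary polynomial `∑ b < N, ∑ l ≤ i, auxTerm κ v i b l`. -/
noncomputable def auxTerm (κ : ℕ) (v : ℕ → K[X,Y]) (i b l : ℕ) : K[X,Y] :=
  MvPolynomial.X 0 ^ ((D.Q + 2) * l) * D.auxCoeff v i b l
    * (MvPolynomial.X 0 ^ κ - MvPolynomial.X 0) ^ (i - l) * (MvPolynomial.X 1 ^ b) ^ κ

/-- The Taylor polynomial of order `i` for the value of `thetaSlope` at `(x, y; y ^ κ)`, translated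
along the flow from `x` to `x ^ κ` and cleared of denominators. -/
noncomputable def slopeTranslate (κ i : ℕ) : K[X,Y] :=
  ∑ b ∈ range D.N, (MvPolynomial.X 1 ^ b) ^ κ * ∑ l ∈ range (i + 1),
    (MvPolynomial.X 0 ^ κ - MvPolynomial.X 0) ^ (i - l) * MvPolynomial.X 0 ^ ((D.Q + 2) * l)
      * D.slopeCoeff b (i - l)

theorem sum_auxTerm (κ : ℕ) (v : ℕ → K[X,Y]) (i : ℕ) :
    ∑ b ∈ range D.N, ∑ l ∈ range (i + 1), D.auxTerm κ v i b l =
      ∑ j ∈ range (i + 1), v j * (MvPolynomial.X 0 ^ κ - MvPolynomial.X 0) ^ (i - j)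
        * D.slopeTranslate κ j := by
  simp only [slopeTranslate, mul_sum]
  conv_rhs => rw [sum_comm]
  refine sum_congr rfl fun b _ ↦ ?_
  simp only [auxTerm, auxCoeff, mul_sum, sum_mul]
  rw [sum_comm' (t' := range (i + 1)) (s' := fun j ↦ range (j + 1))]
  · refine sum_congr rfl fun j hj ↦ sum_congr rfl fun l hl ↦ ?_
    rw [mem_range] at hj hl
    rw [show i - l = i - j + (j - l) by omega]
    ring
  · intro l j
    simp only [mem_range, mem_Ico]
    omega

theorem slopeCoeff_zero (b : ℕ) :
    D.slopeCoeff b 0 = (D.thetaSlope (MvPolynomial.X 0 : K[X,Y]) (MvPolynomial.X 1)).coeff b := by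
  rw [slopeCoeff, coeff_zero_eq_constantCoeff_apply, constantCoeff_flow]

theorem totalDegree_slopeCoeff_le (b j : ℕ) :
    (D.slopeCoeff b j).totalDegree ≤ D.F + D.Q - 1 + (D.N + 2) * j :=
  (D.totalDegree_coeff_flow_le _ j).trans
    (Nat.add_le_add_right (D.totalDegree_coeff_thetaSlope_le b) _)

theorem totalDegree_auxCoeff_le {v : ℕ → K[X,Y]} {S i : ℕ}
    (hv : ∀ j ≤ i, (v j).totalDegree + (D.N + 2) * j ≤ S) (b l : ℕ) :
    (D.auxCoeff v i b l).totalDegree ≤ S + (D.F + D.Q - 1) - (D.N + 2) * l := by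
  refine MvPolynomial.totalDegree_finsetSum_le fun j hj ↦
    (MvPolynomial.totalDegree_mul _ _).trans ?_
  obtain ⟨hlj, hji⟩ := mem_Ico.1 hj
  obtain ⟨m, rfl⟩ := Nat.exists_eq_add_of_le hlj
  have hvj := hv (l + m) (by omega)
  have hslope := D.totalDegree_slopeCoeff_le b m
  rw [Nat.add_sub_cancel_left]
  rw [mul_add] at hvj
  omega

section Branch

variable {D}
variable {L : Type*} [Field L] [Algebra K L]
variable {ψ : K[X,Y] →ₐ[K] L⟦X⟧} {x₁ : L}

theorem sum_map_coeff_thetaSlope (D : IndexedQPoly K) {B : Type*} [CommRing B] [Algebra K B]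
    (φ : K[X,Y] →ₐ[K] B) (z : B) :
    ∑ b ∈ range D.N,
        φ ((D.thetaSlope (MvPolynomial.X 0 : K[X,Y]) (MvPolynomial.X 1)).coeff b) * z ^ b =
      (D.thetaSlope (φ (MvPolynomial.X 0)) (φ (MvPolynomial.X 1))).eval z := by
  rw [← map_thetaSlope, Polynomial.eval_map]
  exact (Polynomial.eval₂_eq_sum_range' _ (D.natDegree_thetaSlope_lt _ _) z).symm

theorem IsBranch.map_slopeTranslate (hψ : D.IsBranch ψ x₁) (hx₁ : x₁ ≠ 0) (κ i : ℕ) :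
    ψ (D.slopeTranslate κ i) = (C x₁ + X) ^ ((D.Q + 2) * i) * ∑ b ∈ range D.N,
      (ψ (MvPolynomial.X 1) ^ κ) ^ b * ∑ j ∈ range (i + 1), ψ (D.slopeCoeff b j) *
        (((C x₁ + X) ^ κ - (C x₁ + X)) * (C x₁ + X)⁻¹ ^ (D.Q + 2)) ^ j := by
  set x : L⟦X⟧ := C x₁ + X
  set s : L⟦X⟧ := x ^ κ - x
  have hxx : x ^ (D.Q + 2) * x⁻¹ ^ (D.Q + 2) = 1 := by
    rw [← mul_pow, PowerSeries.mul_inv_cancel _ (by simpa [x] using hx₁), one_pow]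
  have hsx : ∀ j m, x ^ ((D.Q + 2) * (j + m)) * (s * x⁻¹ ^ (D.Q + 2)) ^ j =
      s ^ j * x ^ ((D.Q + 2) * m) := fun j m ↦ by
    rw [mul_add, pow_add, pow_mul, mul_right_comm, ← mul_pow, mul_left_comm, hxx, mul_one]
  simp only [slopeTranslate, map_sum, map_mul, map_pow, map_sub, hψ.map_X_zero, mul_sum]
  refine sum_congr rfl fun b _ ↦ ?_
  rw [← sum_range_reflect]
  refine sum_congr rfl fun j hj ↦ ?_
  obtain ⟨m, rfl⟩ := Nat.exists_eq_add_of_le (mem_range_succ_iff.1 hj)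
  rw [show j + m + 1 - 1 - j = m by omega, Nat.add_sub_cancel_right, pow_right_comm]
  linear_combination (-(ψ (MvPolynomial.X 1) ^ κ) ^ b * ψ (D.slopeCoeff b j)) * hsx j m

variable [Fintype K]

theorem IsBranch.sum_pow_card_mul_coeff_thetaSlope_eq_zero (hψ : D.IsBranch ψ x₁)
    (hx₁K : x₁ ^ Fintype.card K = x₁)
    (hy₁ : constantCoeff (ψ (MvPolynomial.X 1)) ^ Fintype.card K ≠
      constantCoeff (ψ (MvPolynomial.X 1))) :
    ∑ b ∈ range D.N, (constantCoeff (ψ (MvPolynomial.X 1)) ^ Fintype.card K) ^ b * constantCoeff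
      (ψ ((D.thetaSlope (MvPolynomial.X 0 : K[X,Y]) (MvPolynomial.X 1)).coeff b)) = 0 := by
  set y₁ : L := constantCoeff (ψ (MvPolynomial.X 1))
  have hroot : D.theta x₁ (y₁ ^ Fintype.card K) = 0 := by
    have h := D.map_theta (FiniteField.frobeniusAlgHom K L) x₁ y₁
    rwa [hψ.theta_constantCoeff, map_zero, FiniteField.frobeniusAlgHom_apply,
      FiniteField.frobeniusAlgHom_apply, hx₁K, eq_comm] at h
  have h := D.sum_map_coeff_thetaSlope ((constantCoeffHom K L).comp ψ) (y₁ ^ Fintype.card K)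
  simp only [AlgHom.comp_apply, constantCoeffHom_apply, hψ.map_X_zero, map_add, constantCoeff_C,
    constantCoeff_X, add_zero] at h
  rw [D.eval_thetaSlope_eq_zero hy₁ hψ.theta_constantCoeff hroot] at h
  simpa only [mul_comm] using h

/-- At a branch, `slopeTranslate` is, up to a unit, the value of `thetaSlope` at the base point
`(x₁, y₁)` and at `y₁ ^ |K|`, which is another root of `theta x₁`. -/
theorem IsBranch.X_pow_dvd_map_slopeTranslate (hψ : D.IsBranch ψ x₁) (hx₁ : x₁ ≠ 0)
    (hx₁K : x₁ ^ Fintype.card K = x₁)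
    (hy₁ : constantCoeff (ψ (MvPolynomial.X 1)) ^ Fintype.card K ≠
      constantCoeff (ψ (MvPolynomial.X 1))) {i : ℕ} (hi : i < Fintype.card K) :
    X ^ (i + 1) ∣ ψ (D.slopeTranslate (Fintype.card K) i) := by
  set y₁ : L := constantCoeff (ψ (MvPolynomial.X 1))
  set s : L⟦X⟧ := (C x₁ + X) ^ Fintype.card K - (C x₁ + X)
  set δ : ℕ → K[X,Y] := (D.thetaSlope (MvPolynomial.X 0 : K[X,Y]) (MvPolynomial.X 1)).coeff
  have hpow : ∀ w : L⟦X⟧,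
      X ^ (i + 1) ∣ w ^ Fintype.card K - C (constantCoeff w ^ Fintype.card K) :=
    fun w ↦ (pow_dvd_pow X hi).trans (X_pow_card_dvd_pow_card_sub w)
  have hs : X ^ (i + 1) ∣ s + X := by
    have h := hpow (C x₁ + X)
    rw [map_add, constantCoeff_C, constantCoeff_X, add_zero, hx₁K] at h
    convert h using 1
    ring
  have hsX : X ∣ s := X_dvd_iff.2 (by simp [s, hx₁K])
  have hsum : ∑ b ∈ range D.N, C (y₁ ^ Fintype.card K) ^ b * C (constantCoeff (ψ (δ b))) =
      (0 : L⟦X⟧) := by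
    simp only [← map_pow, ← map_mul, ← map_sum, δ]
    rw [hψ.sum_pow_card_mul_coeff_thetaSlope_eq_zero hx₁K hy₁, map_zero]
  rw [hψ.map_slopeTranslate hx₁, ← sub_zero (∑ b ∈ range D.N, _), ← hsum, ← sum_sub_distrib]
  exact (dvd_sum fun b _ ↦ dvd_mul_sub_mul ((hpow _).trans (sub_dvd_pow_sub_pow _ _ b))
    (hψ.X_pow_dvd_sum_flow_sub hx₁ (δ b) hs hsX)).mul_left _

theorem IsBranch.X_pow_dvd_map_sum_auxTerm (hψ : D.IsBranch ψ x₁) (hx₁ : x₁ ≠ 0)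
    (hx₁K : x₁ ^ Fintype.card K = x₁)
    (hy₁ : constantCoeff (ψ (MvPolynomial.X 1)) ^ Fintype.card K ≠
      constantCoeff (ψ (MvPolynomial.X 1))) (v : ℕ → K[X,Y]) {i : ℕ} (hi : i < Fintype.card K) :
    X ^ (i + 1) ∣
      ψ (∑ b ∈ range D.N, ∑ l ∈ range (i + 1), D.auxTerm (Fintype.card K) v i b l) := by
  rw [sum_auxTerm, map_sum]
  refine dvd_sum fun j hj ↦ ?_
  have hji := mem_range.1 hj
  have hX : X ∣ (C x₁ + X) ^ Fintype.card K - (C x₁ + X) := X_dvd_iff.2 (by simp [hx₁K])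
  rw [map_mul, map_mul, map_pow, map_sub, map_pow, hψ.map_X_zero,
    show i + 1 = i - j + (j + 1) by omega, pow_add]
  exact mul_dvd_mul ((pow_dvd_pow_of_dvd hX _).mul_left _)
    (hψ.X_pow_dvd_map_slopeTranslate hx₁ hx₁K hy₁ (by omega))

theorem IsBranch.map_auxTerm_mem_frobeniusPairs {x₀ : K} {ψ : K[X,Y] →ₐ[K] K⟦X⟧}
    (hψ : D.IsBranch ψ x₀) {v : ℕ → K[X,Y]} {S i : ℕ}
    (hv : ∀ j ≤ i, (v j).totalDegree + (D.N + 2) * j ≤ S) (b : ℕ) {l : ℕ} (hl : l ≤ i) :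
    (ψ (D.auxTerm (Fintype.card K) v i b l),
      ψ (MvPolynomial.X 0 ^ ((D.Q + 2) * l) * D.auxCoeff v i b l) * 0 ^ (i - l)
        * ψ (MvPolynomial.X 1) ^ b) ∈
      frobeniusPairs ((MvPolynomial.restrictTotalDegree (Fin 2) K
        (S + (D.F + D.Q - 1) + i)).map ψ.toLinearMap) := by
  set c : K[X,Y] := MvPolynomial.X 0 ^ ((D.Q + 2) * l) * D.auxCoeff v i b l with hc_def
  rw [auxTerm, ← hc_def, map_mul, map_mul, map_pow _ _ (i - l), map_sub, map_pow, map_pow, map_pow,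
    hψ.map_X_zero]
  refine frobeniusPairs.mul_sub_pow_mem (fun m hm ↦ ?_) _
  refine ⟨c * MvPolynomial.X 0 ^ m, ?_, by simp [hψ.map_X_zero]⟩
  have hdeg := D.totalDegree_auxCoeff_le hv b l
  have hmul := MvPolynomial.totalDegree_mul c (MvPolynomial.X 0 ^ m)
  have hc : c.totalDegree ≤ _ := MvPolynomial.totalDegree_mul _ _
  have hQN : (D.Q + 2) * l ≤ (D.N + 2) * l :=
    Nat.mul_le_mul_right l (Nat.add_le_add_right D.Q_le_N 2)
  have hvl := hv l hl
  rw [MvPolynomial.totalDegree_X_pow] at hmul hc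
  rw [SetLike.mem_coe, MvPolynomial.mem_restrictTotalDegree]
  omega

/-- Replacing `|K|`-th powers by their bases turns `∑ auxTerm` into a multiple of the derivative of
`theta` in its second argument, since `X ^ |K| - X` becomes zero; hence the sum itself is nonzero
if `frobeniusPairs` is the graph of a map. -/
theorem IsBranch.map_sum_auxTerm_ne_zero {x₀ : K} {ψ : K[X,Y] →ₐ[K] K⟦X⟧} (hψ : D.IsBranch ψ x₀)
    {v : ℕ → K[X,Y]} {S i : ℕ} (hv : ∀ j ≤ i, (v j).totalDegree + (D.N + 2) * j ≤ S)
    (hvi : ψ (v i) ≠ 0)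
    (hlow : ∀ P : K[X,Y], P.totalDegree ≤ S + (D.F + D.Q - 1) + i →
      X ^ Fintype.card K ∣ ψ P → ψ P = 0) :
    ψ (∑ b ∈ range D.N, ∑ l ∈ range (i + 1), D.auxTerm (Fintype.card K) v i b l) ≠ 0 := by
  set x : K⟦X⟧ := C x₀ + X
  set y : K⟦X⟧ := ψ (MvPolynomial.X 1)
  have hdiag : ∑ b ∈ range D.N, ∑ l ∈ range (i + 1),
      ψ (MvPolynomial.X 0 ^ ((D.Q + 2) * l) * D.auxCoeff v i b l) * 0 ^ (i - l) * y ^ b =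
        x ^ ((D.Q + 2) * i) * ψ (v i) * -(algebraMap K K⟦X⟧ (D.a 0) * x ^ D.Q) := by
    have hslope := D.sum_map_coeff_thetaSlope ψ y
    rw [hψ.map_X_zero] at hslope
    rw [← D.eval_thetaSlope_self x y, ← hslope, mul_sum]
    refine sum_congr rfl fun b _ ↦ ?_
    rw [sum_eq_single_of_mem i (self_mem_range_succ i) fun l hl hli ↦ ?_]
    · simp [auxCoeff, slopeCoeff_zero, mul_assoc, hψ.map_X_zero, x]
    · rw [mem_range] at hl
      rw [zero_pow (by omega), mul_zero, zero_mul]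
  intro h0
  have hmem := Submodule.sum_mem _ fun b (_ : b ∈ range D.N) ↦ Submodule.sum_mem _ fun l hl ↦
    hψ.map_auxTerm_mem_frobeniusPairs hv b (mem_range_succ_iff.1 hl)
  simp only [← prod_mk_sum] at hmem
  rw [hdiag] at hmem
  simp only [← map_sum, h0] at hmem
  have hx : x ≠ 0 := fun h ↦ by simpa [x] using congr_arg (coeff 1) h
  have ha : algebraMap K K⟦X⟧ (D.a 0) ≠ 0 :=
    (map_ne_zero_iff _ (algebraMap K K⟦X⟧).injective).2 D.a_zero_ne
  refine mul_ne_zero (mul_ne_zero (pow_ne_zero _ hx) hvi)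
    (neg_ne_zero.2 (mul_ne_zero ha (pow_ne_zero _ hx))) (frobeniusPairs.eq_zero_of_mem ?_ hmem)
  rintro _ ⟨P, hP, rfl⟩ hdvd
  exact hlow P ((MvPolynomial.mem_restrictTotalDegree _ _ _).1 hP) hdvd

end Branch

end AuxiliaryPolynomial

end IndexedQPoly

section PlaneCurve

variable {K : Type*} [Field K]

theorem two_mul_finrank_restrictTotalDegree (d : ℕ) :
    2 * Module.finrank K (MvPolynomial.restrictTotalDegree (Fin 2) K d) = (d + 1) * (d + 2) := by
  have hbasis : Module.finrank K (MvPolynomial.restrictTotalDegree (Fin 2) K d) =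
      Nat.card {n : Fin 2 →₀ ℕ | n.sum (fun _ i ↦ i) ≤ d} :=
    Module.finrank_eq_nat_card_basis (MvPolynomial.basisRestrictSupport K _)
  have hset : {n : Fin 2 →₀ ℕ | n.sum (fun _ i ↦ i) ≤ d} =
      ((range (d + 1)).biUnion fun i ↦ (univ : Finset (Fin 2)).finsuppAntidiag i) := by
    ext n
    simp [mem_finsuppAntidiag, Finsupp.sum_fintype]
  rw [hbasis, hset, Nat.card_coe_set_eq, Set.ncard_coe_finset, card_biUnion fun i _ j _ hij ↦
    disjoint_left.2 fun n hi hj ↦ hij ((mem_finsuppAntidiag.1 hi).1.symm.trans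
      (mem_finsuppAntidiag.1 hj).1)]
  have hcard : ∀ i, #((univ : Finset (Fin 2)).finsuppAntidiag i) = i + 1 := fun i ↦ by
    rw [card_finsuppAntidiag_nat_eq_choose, card_univ, Fintype.card_fin, Nat.add_comm 2 i,
      show i + 2 - 1 = i + 1 from rfl, Nat.choose_succ_self_right]
  simp only [hcard]
  rw [sum_add_distrib, mul_add, mul_comm 2 (∑ i ∈ _, i), sum_range_id_mul_two]
  simp
  ring

theorem finrank_map_add_finrank_inf_ker {E G : Type*} [AddCommGroup E] [Module K E]
    [AddCommGroup G] [Module K G] (f : E →ₗ[K] G) (S : Submodule K E) [Module.Finite K S] :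
    Module.finrank K (S.map f) + Module.finrank K ↥(S ⊓ LinearMap.ker f) =
      Module.finrank K S := by
  have h := LinearMap.finrank_range_add_finrank_ker (f.domRestrict S)
  rwa [LinearMap.range_domRestrict, LinearMap.ker_domRestrict,
    (Submodule.equivMapOfInjective S.subtype S.subtype_injective _).finrank_eq,
    Submodule.map_comap_subtype] at h

section Image

variable {A : Type*} [CommRing A] [Algebra K A] (φ : K[X,Y] →ₐ[K] A)

/-- The values of the polynomials of total degree at most `d` under an evaluation `φ`. Its
dimension is the affine Hilbert function of the ideal `ker φ`. -/
noncomputable def imageOfDegree (d : ℕ) : Submodule K A :=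
  (MvPolynomial.restrictTotalDegree (Fin 2) K d).map φ.toLinearMap

namespace imageOfDegree

instance (d : ℕ) : Module.Finite K (imageOfDegree φ d) := by
  unfold imageOfDegree
  infer_instance

variable {φ}

theorem mem_iff {d : ℕ} {u : A} : u ∈ imageOfDegree φ d ↔ ∃ P, P.totalDegree ≤ d ∧ φ P = u := by
  simp only [imageOfDegree, Submodule.mem_map, MvPolynomial.mem_restrictTotalDegree]
  rfl

theorem map_mem {d : ℕ} {P : K[X,Y]} (hP : P.totalDegree ≤ d) : φ P ∈ imageOfDegree φ d :=
  mem_iff.2 ⟨P, hP, rfl⟩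

theorem mul_le (c d : ℕ) :
    imageOfDegree φ c * imageOfDegree φ d ≤ imageOfDegree φ (c + d) := by
  refine Submodule.mul_le.2 fun u hu v hv ↦ ?_
  obtain ⟨P, hP, rfl⟩ := mem_iff.1 hu
  obtain ⟨P', hP', rfl⟩ := mem_iff.1 hv
  rw [← map_mul]
  exact map_mem ((MvPolynomial.totalDegree_mul _ _).trans (add_le_add hP hP'))

variable {e : K[X,Y]} (he : e ≠ 0) (hker : RingHom.ker φ = Ideal.span {e})
include he hker

theorem restrictTotalDegree_inf_ker (d : ℕ) :
    MvPolynomial.restrictTotalDegree (Fin 2) K (d + e.totalDegree) ⊓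
        LinearMap.ker φ.toLinearMap =
      (MvPolynomial.restrictTotalDegree (Fin 2) K d).map (LinearMap.mulLeft K e) := by
  have hmem : ∀ P, P ∈ LinearMap.ker φ.toLinearMap ↔ e ∣ P := fun P ↦ by
    rw [← Ideal.mem_span_singleton, ← hker]
    rfl
  ext P
  rw [Submodule.mem_inf, hmem, MvPolynomial.mem_restrictTotalDegree, Submodule.mem_map]
  simp only [MvPolynomial.mem_restrictTotalDegree]
  constructor
  · rintro ⟨hP, w, rfl⟩
    refine ⟨w, ?_, rfl⟩
    rcases eq_or_ne w 0 with rfl | hw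
    · simp
    · rw [MvPolynomial.totalDegree_mul_of_isDomain he hw] at hP
      omega
  · rintro ⟨w, hw, rfl⟩
    exact ⟨(MvPolynomial.totalDegree_mul _ _).trans (by omega), dvd_mul_right _ _⟩

theorem finrank_add_finrank (d : ℕ) :
    Module.finrank K (imageOfDegree φ (d + e.totalDegree)) +
        Module.finrank K (MvPolynomial.restrictTotalDegree (Fin 2) K d) =
      Module.finrank K (MvPolynomial.restrictTotalDegree (Fin 2) K (d + e.totalDegree)) := by
  have hinj : Function.Injective (LinearMap.mulLeft K e) := fun _ _ h ↦ mul_left_cancel₀ he h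
  rw [← finrank_map_add_finrank_inf_ker φ.toLinearMap
    (MvPolynomial.restrictTotalDegree (Fin 2) K (d + e.totalDegree)),
    restrictTotalDegree_inf_ker he hker,
    ← (Submodule.equivMapOfInjective _ hinj _).finrank_eq, imageOfDegree]

theorem two_mul_finrank (d : ℕ) :
    2 * Module.finrank K (imageOfDegree φ (d + e.totalDegree)) =
      e.totalDegree * (2 * d + e.totalDegree + 3) := by
  have h := finrank_add_finrank he hker d
  have hd := two_mul_finrank_restrictTotalDegree (K := K) d
  have hde := two_mul_finrank_restrictTotalDegree (K := K) (d + e.totalDegree)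
  zify at *
  linear_combination 2 * h - hd + hde

end imageOfDegree

end Image

section Branch

open PowerSeries

variable {ψ : K[X,Y] →ₐ[K] K⟦X⟧} {x₀ : K}

theorem X_pow_mem_imageOfDegree (hψ : ψ (MvPolynomial.X 0) = C x₀ + X) {j d : ℕ} (h : j ≤ d) :
    X ^ j ∈ imageOfDegree ψ d := by
  refine imageOfDegree.mem_iff.2 ⟨(MvPolynomial.X 0 - MvPolynomial.C x₀) ^ j, ?_, ?_⟩
  · refine (MvPolynomial.totalDegree_pow _ _).trans ?_
    have hlin : (MvPolynomial.X 0 - MvPolynomial.C x₀ : K[X,Y]).totalDegree ≤ 1 :=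
      (MvPolynomial.totalDegree_sub _ _).trans (by simp)
    exact (Nat.mul_le_mul_left j hlin).trans (by omega)
  · rw [map_pow, map_sub, hψ, ← MvPolynomial.algebraMap_eq, AlgHom.commutes,
      PowerSeries.algebraMap_apply, Algebra.algebraMap_self_apply, add_sub_cancel_left]

theorem add_finrank_inf_ker (hψ : ψ (MvPolynomial.X 0) = C x₀ + X) {M d : ℕ} (h : M ≤ d + 1) :
    M + Module.finrank K ↥(imageOfDegree ψ d ⊓
        LinearMap.ker (LinearMap.pi fun i : Fin M ↦ (coeff (i : ℕ) : K⟦X⟧ →ₗ[K] K))) =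
      Module.finrank K (imageOfDegree ψ d) := by
  have hsurj : (imageOfDegree ψ d).map
      (LinearMap.pi fun i : Fin M ↦ (coeff (i : ℕ) : K⟦X⟧ →ₗ[K] K)) = ⊤ := by
    rw [eq_top_iff, ← (Pi.basisFun K (Fin M)).span_eq, Submodule.span_le]
    rintro _ ⟨i, rfl⟩
    refine ⟨X ^ (i : ℕ), X_pow_mem_imageOfDegree hψ (by omega), ?_⟩
    ext j
    simp [coeff_X_pow, Pi.single_apply, Fin.ext_iff]
  rw [← finrank_map_add_finrank_inf_ker (LinearMap.pi fun i : Fin M ↦ coeff (i : ℕ))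
    (imageOfDegree ψ d), hsurj, finrank_top, Module.finrank_fin_fun]

variable {e : K[X,Y]}

/-- Otherwise `0 < (e) < ker ψ < ker (constantCoeff ∘ ψ)` would be a chain of four primes in a ring
of dimension two. -/
theorem ker_eq_span_of_prime (hψ : ψ (MvPolynomial.X 0) = C x₀ + X) (he : Prime e)
    (hψe : ψ e = 0) : RingHom.ker ψ = Ideal.span {e} := by
  set ψ₀ : K[X,Y] →+* K := (constantCoeff (R := K)).comp (ψ : K[X,Y] →+* K⟦X⟧)
  have : (Ideal.span {e}).IsPrime := (Ideal.span_singleton_prime he.ne_zero).2 he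
  have : (RingHom.ker ψ).IsPrime := RingHom.ker_isPrime _
  have : (RingHom.ker ψ₀).IsPrime := RingHom.ker_isPrime _
  have hle : Ideal.span {e} ≤ RingHom.ker ψ := by simpa [Ideal.span_le] using hψe
  by_contra hne
  have h₁ : (⊥ : Ideal K[X,Y]) < Ideal.span {e} :=
    bot_lt_iff_ne_bot.2 fun h ↦ he.ne_zero (Ideal.span_singleton_eq_bot.1 h)
  have h₂ : Ideal.span {e} < RingHom.ker ψ := hle.lt_of_ne' hne
  have h₃ : RingHom.ker ψ < RingHom.ker ψ₀ := by
    refine lt_of_le_of_ne (fun P hP ↦ ?_) fun h ↦ ?_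
    · change constantCoeff (ψ P) = 0
      rw [show ψ P = 0 from hP, map_zero]
    · have hmem : MvPolynomial.X 0 - algebraMap K K[X,Y] x₀ ∈ RingHom.ker ψ := by
        rw [h, RingHom.mem_ker]
        simp [ψ₀, hψ]
      rw [RingHom.mem_ker, map_sub, AlgHom.commutes, hψ, PowerSeries.algebraMap_apply,
        Algebra.algebraMap_self_apply, add_sub_cancel_left] at hmem
      exact X_ne_zero hmem
  have hdim : (RingHom.ker ψ₀).height ≤ 2 := by
    have h := (RingHom.ker ψ₀).height_le_ringKrullDim_of_isPrime
    rw [MvPolynomial.ringKrullDim_of_isNoetherianRing, ringKrullDim_eq_zero_of_field, zero_add,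
      Nat.card_eq_fintype_card, Fintype.card_fin] at h
    exact WithBot.coe_le_coe.1 h
  have h₁' := Order.add_one_le_of_lt (Ideal.height_strict_mono_of_isPrime h₁)
  have h₂' := Order.add_one_le_of_lt (Ideal.height_strict_mono_of_isPrime h₂)
  have h₃' := Order.add_one_le_of_lt (Ideal.height_strict_mono_of_isPrime h₃)
  have hthree : (3 : ℕ∞) ≤ 2 := by
    calc (3 : ℕ∞) = 0 + 1 + 1 + 1 := by norm_num
      _ ≤ (⊥ : Ideal K[X,Y]).height + 1 + 1 + 1 := by gcongr; exact zero_le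
      _ ≤ (Ideal.span {e}).height + 1 + 1 := by gcongr
      _ ≤ (RingHom.ker ψ).height + 1 := by gcongr
      _ ≤ _ := h₃'.trans hdim
  norm_num at hthree

/-- Bézout's inequality for the intersection multiplicity at the centre of a branch. -/
theorem le_totalDegree_mul_of_X_pow_dvd (hψ : ψ (MvPolynomial.X 0) = C x₀ + X) (he : Prime e)
    (hψe : ψ e = 0) {P : K[X,Y]} (hψP : ψ P ≠ 0) {W M : ℕ} (hP : P.totalDegree ≤ W)
    (hM : X ^ M ∣ ψ P) : M ≤ e.totalDegree * W := by
  have hker := ker_eq_span_of_prime hψ he hψe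
  have hle : (imageOfDegree ψ (M + e.totalDegree)).map (LinearMap.mulLeft K (ψ P)) ≤
      imageOfDegree ψ (W + M + e.totalDegree) ⊓
        LinearMap.ker (LinearMap.pi fun i : Fin M ↦ (coeff (i : ℕ) : K⟦X⟧ →ₗ[K] K)) := by
    rintro _ ⟨v, hv, rfl⟩
    refine ⟨?_, funext fun i ↦ X_pow_dvd_iff.1 (hM.mul_right v) i i.2⟩
    rw [add_assoc]
    exact imageOfDegree.mul_le _ _ (Submodule.mul_mem_mul (imageOfDegree.map_mem hP) hv)
  have hdim := Submodule.finrank_mono hle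
  rw [← (Submodule.equivMapOfInjective _ (fun _ _ h ↦ mul_left_cancel₀ hψP h) _).finrank_eq]
    at hdim
  have hdrop := add_finrank_inf_ker hψ (M := M) (d := W + M + e.totalDegree) (by omega)
  have hsmall := imageOfDegree.two_mul_finrank he.ne_zero hker M
  have hlarge := imageOfDegree.two_mul_finrank he.ne_zero hker (W + M)
  nlinarith

end Branch

end PlaneCurve

namespace IndexedQPoly

variable {K : Type*} [Field K] (D : IndexedQPoly K)

section Derivation

variable {A : Type*} [CommRing A] [Algebra K A] (δ : Derivation K A A)

theorem derivation_pow_q_pow (z : A) {j : ℕ} (hj : j ≠ 0) : δ (z ^ D.q ^ j) = 0 := by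
  have := D.charP
  have hchar : ((D.q ^ j : ℕ) : K) = 0 :=
    (CharP.cast_eq_zero_iff K D.p _).2 (dvd_pow (dvd_pow_self _ D.e_pos.ne') hj)
  rw [δ.leibniz_pow, ← Nat.cast_smul_eq_nsmul K, hchar, zero_smul]

theorem derivation_lin (z : A) : δ (D.lin z) = D.a 0 • δ z := by
  simp only [lin, ← Algebra.smul_def]
  rw [map_sum, sum_range_succ', sum_eq_zero fun j _ ↦ ?_]
  · simp
  · rw [δ.map_smul, D.derivation_pow_q_pow δ z j.succ_ne_zero, smul_zero]

theorem derivation_theta (x y : A) :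
    δ (D.theta x y) = D.a 0 • (δ x * y ^ D.Q - δ y * x ^ D.Q) := by
  rw [theta, map_sub, δ.leibniz, δ.leibniz, derivation_lin, derivation_lin, Q,
    D.derivation_pow_q_pow δ x D.t_pos.ne', D.derivation_pow_q_pow δ y D.t_pos.ne']
  simp only [smul_zero, zero_add]
  simp only [smul_eq_mul, mul_smul_comm, smul_sub, mul_comm]

end Derivation

section Component

open PowerSeries

theorem pderiv_one_curve :
    MvPolynomial.pderiv 1 D.curve = -(D.a 0 • MvPolynomial.X 0 ^ D.Q) := by
  rw [curve, derivation_theta, MvPolynomial.pderiv_X_of_ne zero_ne_one, MvPolynomial.pderiv_X_self]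
  simp

theorem totalDegree_curve_le : D.curve.totalDegree ≤ D.F + D.Q := by
  refine (MvPolynomial.totalDegree_sub _ _).trans (max_le ?_ ?_) <;>
  · refine (MvPolynomial.totalDegree_mul _ _).trans ?_
    rw [MvPolynomial.totalDegree_X_pow]
    exact Nat.add_le_add_right (D.totalDegree_lin_X_le _) _

theorem aeval_X_C_mul_X_eq_zero_iff {c : K} {P : K[X,Y]} :
    MvPolynomial.aeval ![(Polynomial.X : Polynomial K), Polynomial.C c * Polynomial.X] P = 0 ↔
      MvPolynomial.X 1 - MvPolynomial.C c * MvPolynomial.X 0 ∣ P := by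
  set ℓ : K[X,Y] := MvPolynomial.X 1 - MvPolynomial.C c * MvPolynomial.X 0
  set line : K[X,Y] →ₐ[K] Polynomial K :=
    MvPolynomial.aeval ![Polynomial.X, Polynomial.C c * Polynomial.X]
  set π := Ideal.Quotient.mkₐ K (Ideal.span {ℓ})
  have hπ : π = (Polynomial.aeval (π (MvPolynomial.X 0))).comp line := by
    refine MvPolynomial.algHom_ext fun i ↦ ?_
    fin_cases i
    · simp [line]
    · have hℓ : π ℓ = 0 := Ideal.Quotient.eq_zero_iff_mem.2 (Ideal.mem_span_singleton_self ℓ)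
      rw [map_sub, map_mul, ← MvPolynomial.algebraMap_eq, AlgHom.commutes, sub_eq_zero] at hℓ
      simpa [line] using hℓ
  constructor
  · intro h
    have hP : π P = 0 := by rw [hπ, AlgHom.comp_apply, h, map_zero]
    exact Ideal.mem_span_singleton.1 (Ideal.Quotient.eq_zero_iff_mem.1 hP)
  · rintro ⟨w, rfl⟩
    simp [ℓ, line]

theorem prime_X_sub_C_mul_X (c : K) :
    Prime (MvPolynomial.X 1 - MvPolynomial.C c * MvPolynomial.X 0 : K[X,Y]) := by
  have hker : RingHom.ker (MvPolynomial.aeval (R := K)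
      ![(Polynomial.X : Polynomial K), Polynomial.C c * Polynomial.X]) =
      Ideal.span {MvPolynomial.X 1 - MvPolynomial.C c * MvPolynomial.X 0} := by
    ext P
    rw [RingHom.mem_ker, Ideal.mem_span_singleton, aeval_X_C_mul_X_eq_zero_iff]
  rw [← Ideal.span_singleton_prime fun h ↦ ?_, ← hker]
  · exact RingHom.ker_isPrime _
  · simpa using congr_arg (MvPolynomial.eval ![0, 1]) h

theorem X_sub_C_mul_X_dvd_curve {c : K} (hc : c ^ D.q = c) :
    MvPolynomial.X 1 - MvPolynomial.C c * MvPolynomial.X 0 ∣ D.curve := by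
  rw [← aeval_X_C_mul_X_eq_zero_iff, curve, map_theta, MvPolynomial.aeval_X, MvPolynomial.aeval_X]
  exact D.theta_self_mul (by rw [← map_pow, hc]) _

variable {D} {ψ : K[X,Y] →ₐ[K] K⟦X⟧} {x₀ : K}

theorem IsBranch.map_pderiv_one_curve_ne_zero (hψ : D.IsBranch ψ x₀) :
    ψ (MvPolynomial.pderiv 1 D.curve) ≠ 0 := by
  have hx : (C x₀ + X : K⟦X⟧) ≠ 0 := fun h ↦ by simpa using congr_arg (coeff 1) h
  rw [pderiv_one_curve, map_neg, map_smul, map_pow, hψ.map_X_zero, neg_ne_zero]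
  exact smul_ne_zero D.a_zero_ne (pow_ne_zero _ hx)

/-- The component `e` of the curve through a branch occurs with multiplicity one, since the curve
is smooth there, so the lines `y = c * x` other than it are in the residual curve `ε`. -/
theorem IsBranch.exists_component (hψ : D.IsBranch ψ x₀)
    (hψc : ∀ c : K, c ^ D.q = c →
      ψ (MvPolynomial.X 1) ≠ ψ (MvPolynomial.C c * MvPolynomial.X 0)) :
    ∃ e ε : K[X,Y], Prime e ∧ D.curve = e * ε ∧ ψ e = 0 ∧ ψ ε ≠ 0 ∧
      ∀ c, c ^ D.q = c → MvPolynomial.X 1 - MvPolynomial.C c * MvPolynomial.X 0 ∣ ε := by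
  have hcurve : D.curve ≠ 0 := fun h ↦
    hψ.map_pderiv_one_curve_ne_zero (by rw [h, map_zero, map_zero])
  obtain ⟨factors, hprime, hfactors⟩ := UniqueFactorizationMonoid.exists_prime_factors _ hcurve
  have hprod : (factors.map ψ).prod = 0 := by
    rw [← map_multiset_prod]
    exact zero_dvd_iff.1 (hψ.map_curve ▸ map_dvd ψ hfactors.symm.dvd)
  obtain ⟨e, he, hψe⟩ := Multiset.mem_map.1 (Multiset.prod_eq_zero_iff.1 hprod)
  obtain ⟨ε, hε⟩ := (Multiset.dvd_prod he).trans hfactors.dvd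
  refine ⟨e, ε, hprime e he, hε, hψe, fun hψε ↦ ?_, fun c hc ↦ ?_⟩
  · refine hψ.map_pderiv_one_curve_ne_zero ?_
    rw [hε, Derivation.leibniz, smul_eq_mul, smul_eq_mul, map_add, map_mul, map_mul, hψe, hψε,
      zero_mul, zero_mul, add_zero]
  · have hdvd := D.X_sub_C_mul_X_dvd_curve hc
    rw [hε] at hdvd
    refine ((prime_X_sub_C_mul_X c).dvd_or_dvd hdvd).resolve_left fun h ↦ hψc c hc ?_
    have hassoc := (prime_X_sub_C_mul_X c).irreducible.associated_of_dvd (hprime e he).irreducible h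
    rw [← sub_eq_zero, ← map_sub]
    exact zero_dvd_iff.1 (hψe ▸ map_dvd ψ hassoc.symm.dvd)

end Component

end IndexedQPoly

section Siegel

theorem exists_ne_zero_forall_sum_mul_eq_zero {K A ι κ : Type*} [Field K] [CommRing A]
    [Algebra K A] [Fintype ι] [Fintype κ] {V : ι → Submodule K A} {G : Submodule K A}
    [∀ i, Module.Finite K (V i)] [Module.Finite K G] {c : κ → ι → A}
    (hc : ∀ p i, ∀ u ∈ V i, u * c p i ∈ G)
    (hlt : Fintype.card κ * Module.finrank K G < ∑ i, Module.finrank K (V i)) :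
    ∃ w : (i : ι) → V i, w ≠ 0 ∧ ∀ p, ∑ i, (w i : A) * c p i = 0 := by
  let Λ : ((i : ι) → V i) →ₗ[K] (κ → G) := LinearMap.pi fun p ↦
    ∑ i, ((LinearMap.mulRight K (c p i)).restrict (hc p i)).comp (LinearMap.proj i)
  have hΛ : ∀ w p, (Λ w p : A) = ∑ i, (w i : A) * c p i := fun w p ↦ by
    simp [Λ]
    rfl
  have hker : LinearMap.ker Λ ≠ ⊥ := LinearMap.ker_ne_bot_of_finrank_lt <| by
    rwa [Module.finrank_pi_fintype, Module.finrank_pi_fintype, sum_const, smul_eq_mul, card_univ]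
  obtain ⟨w, hw, hw0⟩ := Submodule.exists_mem_ne_zero_of_ne_bot hker
  exact ⟨w, hw0, fun p ↦ by rw [← hΛ, LinearMap.mem_ker.1 hw]; rfl⟩

variable {K A : Type*} [Field K] [CommRing A] [Algebra K A]
variable {φ : K[X,Y] →ₐ[K] A} {e : K[X,Y]}

theorem imageOfDegree.two_mul_sum_finrank (he : e ≠ 0) (hker : RingHom.ker φ = Ideal.span {e})
    (s r β : ℕ) :
    2 * ∑ i ∈ range β,
        Module.finrank K (imageOfDegree φ (s * β + 2 * (e.totalDegree + r) - s * i)) =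
      e.totalDegree * β * (s * (β + 1) + 3 * e.totalDegree + 4 * r + 3) := by
  have hterm : ∀ i,
      2 * Module.finrank K (imageOfDegree φ (s * (i + 1) + 2 * (e.totalDegree + r))) =
        e.totalDegree * (2 * (s * (i + 1)) + 3 * e.totalDegree + 4 * r + 3) := fun i ↦ by
    have h := two_mul_finrank he hker (s * (i + 1) + e.totalDegree + 2 * r)
    rw [show s * (i + 1) + e.totalDegree + 2 * r + e.totalDegree =
      s * (i + 1) + 2 * (e.totalDegree + r) by ring] at h
    rw [h]
    ring
  have hsum : ∀ m, 2 * ∑ i ∈ range m,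
      Module.finrank K (imageOfDegree φ (s * (i + 1) + 2 * (e.totalDegree + r))) =
        e.totalDegree * m * (s * (m + 1) + 3 * e.totalDegree + 4 * r + 3) := fun m ↦ by
    induction m with
    | zero => simp
    | succ m ih =>
      rw [sum_range_succ, mul_add, ih, hterm]
      ring
  rw [← hsum, ← sum_range_reflect]
  congr 1
  refine sum_congr rfl fun i hi ↦ ?_
  obtain ⟨m, rfl⟩ := Nat.exists_eq_add_of_lt (mem_range.1 hi)
  have hsub : s * (i + m + 1) + 2 * (e.totalDegree + r) - s * (i + m + 1 - 1 - i) =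
      s * (i + 1) + 2 * (e.totalDegree + r) := by
    rw [show i + m + 1 - 1 - i = m by omega, Nat.sub_eq_iff_eq_add (by nlinarith)]
    ring
  rw [hsub]

theorem imageOfDegree.mul_finrank_lt_two_mul_sum_finrank (he : e ≠ 0)
    (hker : RingHom.ker φ = Ideal.span {e}) (he0 : 0 < e.totalDegree) {g : ℕ}
    (hg : e.totalDegree ≤ g) (s : ℕ) {β : ℕ} (hβ : 0 < β) :
    β * Module.finrank K (imageOfDegree φ (s * β + 3 * g)) <
      2 * ∑ i ∈ range β, Module.finrank K (imageOfDegree φ (s * β + 2 * g - s * i)) := by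
  obtain ⟨r, rfl⟩ := Nat.exists_eq_add_of_le hg
  have hlarge := two_mul_finrank he hker (s * β + 2 * e.totalDegree + 3 * r)
  rw [show s * β + 2 * e.totalDegree + 3 * r + e.totalDegree =
    s * β + 3 * (e.totalDegree + r) by ring] at hlarge
  rw [two_mul_sum_finrank he hker]
  have : 0 < e.totalDegree * β := mul_pos he0 hβ
  nlinarith

end Siegel

namespace IndexedQPoly

variable {K : Type*} [Field K] (D : IndexedQPoly K)

section Siegel

open PowerSeries

theorem two_mul_sum_add_eq {N ν β : ℕ} (hβ : β + N = N * N + 2 * N * ν) :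
    2 * ∑ b ∈ range N, (b + ν) = β := by
  have h : 2 * ∑ b ∈ range N, (b + ν) + N = N * N + 2 * N * ν := by
    clear hβ
    induction N with
    | zero => simp
    | succ N ih =>
      rw [sum_range_succ]
      linarith
  omega

theorem totalDegree_pos_of_prime {A : Type*} [CommRing A] [Nontrivial A] [Algebra K A]
    {φ : K[X,Y] →ₐ[K] A} {e : K[X,Y]} (he : Prime e) (hφe : φ e = 0) : 0 < e.totalDegree := by
  refine Nat.pos_of_ne_zero fun h ↦ he.ne_zero ?_
  obtain ⟨c, rfl⟩ : ∃ c, e = algebraMap K K[X,Y] c :=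
    ⟨_, MvPolynomial.totalDegree_eq_zero_iff_eq_C.1 h⟩
  rw [AlgHom.commutes, map_eq_zero_iff _ (algebraMap K A).injective] at hφe
  rw [hφe, map_zero]

variable {D} {ψ : K[X,Y] →ₐ[K] K⟦X⟧} {x₀ : K} {e : K[X,Y]}

theorem exists_map_sum_mul_slopeCoeff_eq_zero (he : e ≠ 0) (he0 : 0 < e.totalDegree)
    (hker : RingHom.ker ψ = Ideal.span {e}) (hdeg : e.totalDegree ≤ D.F + D.Q) {ν β S : ℕ}
    (hβ0 : 0 < β) (hβ : β + D.N = D.N * D.N + 2 * D.N * ν)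
    (hS : S = (D.N + 2) * β + 2 * (D.F + D.Q)) :
    ∃ w : ℕ → K[X,Y], (∀ i < β, (w i).totalDegree ≤ S - (D.N + 2) * i) ∧ (∃ i < β, ψ (w i) ≠ 0) ∧
      ∀ b < D.N, ∀ l < b + ν,
        ∑ i ∈ range β, ψ (w i) * (if l ≤ i then ψ (D.slopeCoeff b (i - l)) else 0) = 0 := by
  let V : Fin β → Submodule K K⟦X⟧ := fun i ↦ imageOfDegree ψ (S - (D.N + 2) * i)
  let c : ((b : Fin D.N) × Fin (b + ν)) → Fin β → K⟦X⟧ := fun p i ↦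
    if (p.2 : ℕ) ≤ i then ψ (D.slopeCoeff p.1 (i - p.2)) else 0
  have hc : ∀ p i, ∀ u ∈ V i, u * c p i ∈
      imageOfDegree ψ ((D.N + 2) * β + 3 * (D.F + D.Q)) := by
    intro p i u hu
    obtain ⟨P, hP, rfl⟩ := imageOfDegree.mem_iff.1 hu
    simp only [c]
    split_ifs with hle
    · rw [← map_mul]
      refine imageOfDegree.map_mem ((MvPolynomial.totalDegree_mul _ _).trans ?_)
      have hslope := D.totalDegree_slopeCoeff_le p.1 (i - p.2)
      have hi : (D.N + 2) * i ≤ (D.N + 2) * β := Nat.mul_le_mul_left _ i.2.le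
      have hsub : (D.N + 2) * (i - p.2) ≤ (D.N + 2) * i := Nat.mul_le_mul_left _ (Nat.sub_le _ _)
      omega
    · rw [mul_zero]
      exact Submodule.zero_mem _
  have hcard : 2 * Fintype.card ((b : Fin D.N) × Fin (b + ν)) = β := by
    simp only [Fintype.card_sigma, Fintype.card_fin]
    rw [Fin.sum_univ_eq_sum_range (fun b ↦ b + ν), two_mul_sum_add_eq hβ]
  have hdim := imageOfDegree.mul_finrank_lt_two_mul_sum_finrank he hker he0 hdeg (D.N + 2) hβ0
  rw [← hS, ← Fin.sum_univ_eq_sum_range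
    (fun i ↦ Module.finrank K (imageOfDegree ψ (S - (D.N + 2) * i)))] at hdim
  obtain ⟨w, hw0, hw⟩ := exists_ne_zero_forall_sum_mul_eq_zero hc (by nlinarith)
  choose P hP hPw using fun i ↦ imageOfDegree.mem_iff.1 (w i).2
  obtain ⟨v, hv⟩ : ∃ v : ℕ → K[X,Y], ∀ i : Fin β, v i = P i :=
    ⟨Function.extend Fin.val P 0, Fin.val_injective.extend_apply P 0⟩
  refine ⟨v, fun i hi ↦ ?_, ?_, fun b hb l hl ↦ ?_⟩
  · rw [hv ⟨i, hi⟩]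
    exact hP ⟨i, hi⟩
  · obtain ⟨i, hi⟩ := Function.ne_iff.1 hw0
    refine ⟨i, i.2, ?_⟩
    rw [hv, hPw]
    simpa using hi
  · rw [← Fin.sum_univ_eq_sum_range
      (fun i ↦ ψ (v i) * if l ≤ i then ψ (D.slopeCoeff b (i - l)) else 0)]
    simpa only [hv, hPw, c] using hw ⟨⟨b, hb⟩, ⟨l, hl⟩⟩

theorem exists_map_auxCoeff_eq_zero (he : e ≠ 0) (he0 : 0 < e.totalDegree)
    (hker : RingHom.ker ψ = Ideal.span {e}) (hdeg : e.totalDegree ≤ D.F + D.Q) {ν β S : ℕ}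
    (hβ0 : 0 < β) (hβ : β + D.N = D.N * D.N + 2 * D.N * ν)
    (hS : S = (D.N + 2) * β + 2 * (D.F + D.Q)) :
    ∃ i < β, ∃ v : ℕ → K[X,Y], (∀ j < β, (v j).totalDegree + (D.N + 2) * j ≤ S) ∧ ψ (v i) ≠ 0 ∧
      ∀ b < D.N, ∀ l < b + ν, ψ (D.auxCoeff v i b l) = 0 := by
  classical
  obtain ⟨v, hv, ⟨j, hjβ, hvj⟩, hsum⟩ :=
    exists_map_sum_mul_slopeCoeff_eq_zero he he0 hker hdeg hβ0 hβ hS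
  have hne : ({i ∈ range β | ψ (v i) ≠ 0} : Finset ℕ).Nonempty := ⟨j, by simp [hjβ, hvj]⟩
  obtain ⟨hiβ, hvi⟩ := mem_filter.1 (max'_mem _ hne)
  have hmax : ∀ j ∈ range β, max' _ hne < j → ψ (v j) = 0 := fun j hj hlt ↦ by
    by_contra h
    exact (le_max' _ j (mem_filter.2 ⟨hj, h⟩)).not_gt hlt
  refine ⟨_, mem_range.1 hiβ, v, fun j hj ↦ ?_, hvi, fun b hb l hl ↦ ?_⟩
  · have := hv j hj
    have : (D.N + 2) * j ≤ (D.N + 2) * β := Nat.mul_le_mul_left _ hj.le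
    omega
  · rw [mem_range] at hiβ
    rw [auxCoeff, map_sum]
    refine Eq.trans ?_ (hsum b hb l hl)
    refine sum_subset_zero_on_sdiff (fun j hj ↦ ?_) (fun j hj ↦ ?_) fun j hj ↦ ?_
    · rw [mem_range]
      rw [mem_Ico] at hj
      omega
    · rw [mem_sdiff, mem_Ico] at hj
      split_ifs with hlj
      · rw [hmax j hj.1 (by omega), zero_mul]
      · rw [mul_zero]
    · rw [map_mul, if_pos (mem_Ico.1 hj).1]

end Siegel

end IndexedQPoly

section Vanishing

theorem dvd_of_forall_dvd_sum_mul_pow {R : Type*} [CommRing R] {n : ℕ} {v r : Fin n → R} {d : R}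
    (hv : ∀ i j, i ≠ j → IsUnit (v i - v j)) (h : ∀ i, d ∣ ∑ b, r b * v i ^ (b : ℕ)) (b : Fin n) :
    d ∣ r b := by
  choose s hs using h
  have hdet : IsUnit (Matrix.vandermonde v).det := by
    rw [Matrix.det_vandermonde]
    refine IsUnit.prod_iff.2 fun i _ ↦ IsUnit.prod_iff.2 fun j hj ↦ ?_
    exact hv j i (mem_Ioi.1 hj).ne'
  have hsolve : (Matrix.vandermonde v).mulVec r = d • s := by
    ext i
    simpa [Matrix.mulVec, dotProduct, mul_comm] using hs i
  have hr : r = d • (Matrix.vandermonde v)⁻¹.mulVec s := by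
    rw [← Matrix.mulVec_smul, ← hsolve, Matrix.mulVec_mulVec, Matrix.nonsing_inv_mul _ hdet,
      Matrix.one_mulVec]
  rw [hr]
  exact dvd_mul_right _ _

open Polynomial

variable {K : Type*} [Field K]

theorem eq_zero_of_forall_X_sub_C_pow_dvd {P : K[X]} {G : Finset K} {M : ℕ}
    (h : ∀ x ∈ G, (X - C x) ^ M ∣ P) (hP : P.natDegree < M * #G) : P = 0 := by
  refine eq_zero_of_dvd_of_natDegree_lt (p := ∏ x ∈ G, (X - C x) ^ M) ?_ ?_
  · exact prod_dvd_of_coprime (fun x _ y _ hxy ↦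
      (pairwise_coprime_X_sub_C Function.injective_id hxy).pow) h
  · rw [natDegree_prod_of_monic _ _ fun x _ ↦ (monic_X_sub_C x).pow M]
    simpa [mul_comm] using hP

variable {L : Type*} [Field L] [Algebra K L]

theorem aeval_C_add_X (x : K) (P : K[X]) :
    aeval (PowerSeries.C (algebraMap K L x) + PowerSeries.X) P =
      coeToPowerSeries.algHom L (taylor x P) := by
  have h : aeval (PowerSeries.C (algebraMap K L x) + PowerSeries.X) =
      (coeToPowerSeries.algHom L).comp (taylorAlgHom x) := by
    ext1
    simp [coeToPowerSeries.algHom_apply, add_comm]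
  rw [h]
  rfl

theorem aeval_C_add_X_ne_zero (x : K) {P : K[X]} (hP : P ≠ 0) :
    aeval (PowerSeries.C (algebraMap K L x) + PowerSeries.X) P ≠ 0 := by
  rw [aeval_C_add_X, coeToPowerSeries.algHom_apply, ← Polynomial.polynomial_map_coe, Ne,
    Polynomial.coe_eq_zero_iff, Polynomial.map_eq_zero, taylor_eq_zero]
  exact hP

theorem X_sub_C_pow_dvd_of_X_pow_dvd_aeval {x : K} {P : K[X]} {M : ℕ} (h : PowerSeries.X ^ M ∣
      aeval (PowerSeries.C (algebraMap K L x) + PowerSeries.X) P) : (X - C x) ^ M ∣ P := by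
  rw [X_sub_C_pow_dvd_iff, ← taylor_apply, Polynomial.X_pow_dvd_iff]
  intro d hd
  rw [aeval_C_add_X, PowerSeries.X_pow_dvd_iff] at h
  simpa [coeToPowerSeries.algHom_apply] using h d hd

end Vanishing

namespace IndexedQPoly

variable {K : Type*} [Field K] (D : IndexedQPoly K)

section Reduction

open Polynomial

/-- The coefficient of `Y ^ N` in `theta X Y`. -/
noncomputable def leadCoeff : K[X] := (D.thetaPoly (X : K[X])).coeff D.N

theorem coeff_thetaPoly (i : ℕ) : (D.thetaPoly (X : K[X])).coeff i =
    (if i = D.Q then D.lin X else 0)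
      - ∑ j ∈ range (D.k + 1), if i = D.q ^ j then C (D.a j) * X ^ D.Q else 0 := by
  simp only [thetaPoly_eq, coeff_sub, coeff_C_mul_X_pow, finsetSum_coeff]
  rfl

theorem natDegree_lin_X_le : (D.lin (X : K[X])).natDegree ≤ D.F :=
  natDegree_sum_le_of_forall_le _ _ fun _ hj ↦ (natDegree_C_mul_X_pow_le _ _).trans
    (Nat.pow_le_pow_right D.q_pos (mem_range_succ_iff.1 hj))

theorem coeff_lin_X_one : (D.lin (X : K[X])).coeff 1 = D.a 0 := by
  rw [← mul_linDiv, ← zero_add 1, coeff_X_mul, coeff_zero_eq_aeval_zero, map_linDiv, aeval_X]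
  exact D.linDiv_zero

theorem natDegree_coeff_thetaPoly_le {i : ℕ} (hi : i ≤ D.N) :
    ((D.thetaPoly (X : K[X])).coeff i).natDegree ≤ D.N + D.N' - i := by
  have hFQ : D.F + D.Q ≤ D.N + D.N' := by rcases D.max_min_F_Q with h | h <;> omega
  rw [coeff_thetaPoly]
  refine (natDegree_sub_le _ _).trans (max_le ?_ ?_)
  · split_ifs
    · have := D.natDegree_lin_X_le
      omega
    · simp
  · refine natDegree_sum_le_of_forall_le _ _ fun j hj ↦ ?_
    have hF : D.q ^ j ≤ D.F := Nat.pow_le_pow_right D.q_pos (mem_range_succ_iff.1 hj)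
    split_ifs
    · refine (natDegree_C_mul_X_pow_le _ _).trans ?_
      omega
    · simp

theorem natDegree_leadCoeff_le : D.leadCoeff.natDegree ≤ D.N' := by
  have := D.natDegree_coeff_thetaPoly_le le_rfl
  rw [leadCoeff]
  omega

theorem coeff_thetaPoly_eq_zero {i : ℕ} (hi : D.N' < i) (hN : i < D.N) :
    (D.thetaPoly (X : K[X])).coeff i = 0 := by
  have hne : ∀ j, i ≠ D.q ^ j := by
    rintro j rfl
    have h1 := (Nat.pow_lt_pow_iff_right D.two_le_q).1 hi
    have h2 := (Nat.pow_lt_pow_iff_right D.two_le_q).1 hN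
    omega
  simp [coeff_thetaPoly, hne, Q]

theorem leadCoeff_ne_zero : D.leadCoeff ≠ 0 := by
  have hpow : ∀ j, D.N = D.q ^ j ↔ max D.k D.t = j := fun j ↦
    (Nat.pow_right_injective D.two_le_q).eq_iff
  have hNQ : D.N = D.Q ↔ max D.k D.t = D.t := hpow D.t
  simp only [leadCoeff, coeff_thetaPoly, hpow, hNQ]
  rcases lt_or_gt_of_ne D.k_ne_t with h | h
  · rw [max_eq_right h.le, if_pos rfl, sum_eq_zero fun j hj ↦ if_neg ?_, sub_zero]
    · intro hlin
      simpa [hlin, D.a_zero_ne.symm] using D.coeff_lin_X_one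
    · have := mem_range.1 hj
      omega
  · rw [max_eq_left h.le, if_neg h.ne', zero_sub, sum_ite_eq, if_pos (self_mem_range_succ _)]
    simp [D.a_k_ne]

theorem natDegree_thetaPoly {L : Type*} [Field L] [Algebra K L] {x : K}
    (hx : D.leadCoeff.eval x ≠ 0) : (D.thetaPoly (algebraMap K L x)).natDegree = D.N := by
  refine natDegree_eq_of_le_of_coeff_ne_zero (D.natDegree_thetaPoly_le _) ?_
  have h := congr_arg (coeff · D.N) (D.map_thetaPoly (aeval (algebraMap K L x)) (X : K[X]))
  simp only [coeff_map, aeval_X] at h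
  rw [← h, ← leadCoeff, RingHom.coe_coe, aeval_algebraMap_apply]
  simpa using hx

theorem separable_thetaPoly {L : Type*} [Field L] [Algebra K L] {x : L} (hx : x ≠ 0) :
    (D.thetaPoly x).Separable := by
  rw [Separable, derivative_thetaPoly]
  refine isCoprime_one_right.of_isCoprime_of_dvd_right (isUnit_iff_dvd_one.1 (isUnit_C.2 ?_))
  have ha := (map_ne_zero (algebraMap K L)).2 D.a_zero_ne
  exact (neg_ne_zero.2 (mul_ne_zero ha (pow_ne_zero _ hx))).isUnit

/-- The polynomials `H` such that, modulo `curve`, `leadCoeff ^ r * H` is a combination of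
`1, Y, …, Y ^ (N - 1)` with coefficients of degree at most `d` in `X`. -/
noncomputable def reducible (r d : ℕ) : Submodule K (K[X,Y]) where
  carrier := {H | ∃ R : ℕ → K[X], (∀ b, (R b).natDegree ≤ d) ∧
    D.curve ∣ aeval (MvPolynomial.X 0) D.leadCoeff ^ r * H
      - ∑ b ∈ range D.N, aeval (MvPolynomial.X 0) (R b) * MvPolynomial.X 1 ^ b}
  zero_mem' := ⟨0, by simp, by simp⟩
  add_mem' := by
    rintro H H' ⟨R, hR, h⟩ ⟨R', hR', h'⟩
    refine ⟨R + R', fun b ↦ natDegree_add_le_of_degree_le (hR b) (hR' b), ?_⟩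
    convert dvd_add h h' using 1
    simp only [Pi.add_apply, map_add, add_mul, sum_add_distrib]
    ring
  smul_mem' := by
    rintro c H ⟨R, hR, h⟩
    refine ⟨c • R, fun b ↦ (natDegree_smul_le _ _).trans (hR b), ?_⟩
    convert h.mul_left (MvPolynomial.C c) using 1
    simp only [Pi.smul_apply, map_smul, MvPolynomial.smul_eq_C_mul, mul_sub, mul_sum]
    congr 1
    · ring
    · exact sum_congr rfl fun b _ ↦ by ring

variable {D} in
theorem reducible_mono {r d d' : ℕ} (h : d ≤ d') : D.reducible r d ≤ D.reducible r d' :=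
  fun _ ⟨R, hR, hdvd⟩ ↦ ⟨R, fun b ↦ (hR b).trans h, hdvd⟩

theorem curve_eq_sum : D.curve = ∑ i ∈ range (D.N + 1),
    aeval (MvPolynomial.X 0) ((D.thetaPoly (X : K[X])).coeff i) * MvPolynomial.X 1 ^ i := by
  have hmap := D.map_thetaPoly (aeval (MvPolynomial.X 0 : K[X,Y])) (X : K[X])
  rw [aeval_X] at hmap
  rw [curve, ← eval_thetaPoly,
    eval_eq_sum_range' (Nat.lt_succ_of_le (D.natDegree_thetaPoly_le _)), ← hmap]
  simp only [coeff_map]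
  rfl

theorem curve_eq_leadCoeff_mul_add_sum : D.curve =
    aeval (MvPolynomial.X 0) D.leadCoeff * MvPolynomial.X 1 ^ D.N
      + ∑ i ∈ range (D.N' + 1),
        aeval (MvPolynomial.X 0) ((D.thetaPoly (X : K[X])).coeff i) * MvPolynomial.X 1 ^ i := by
  have hN : D.N' + 1 ≤ D.N := by
    rw [N_eq]
    nlinarith [D.two_le_q, D.q_le_N']
  rw [curve_eq_sum, sum_range_succ, add_comm, leadCoeff]
  congr 1
  refine (sum_subset (range_mono hN) fun i hi hi' ↦ ?_).symm
  rw [D.coeff_thetaPoly_eq_zero (by simpa using hi') (mem_range.1 hi), map_zero, zero_mul]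

theorem aeval_mul_X_pow_mem_reducible_of_lt (r : ℕ) {P : K[X]} {i j : ℕ} (hP : P.natDegree ≤ i)
    (hj : j < D.N) : aeval (MvPolynomial.X 0) P * MvPolynomial.X 1 ^ j ∈
      D.reducible r (i + r * D.N') := by
  refine ⟨fun b ↦ if b = j then D.leadCoeff ^ r * P else 0, fun b ↦ ?_, ?_⟩
  · dsimp only
    split_ifs
    · have := natDegree_pow_le_of_le r D.natDegree_leadCoeff_le
      exact (natDegree_mul_le_of_le this hP).trans_eq (add_comm _ _)
    · simp
  · rw [sum_eq_single_of_mem j (mem_range.2 hj) fun b _ hb ↦ by simp [hb]]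
    simp [mul_assoc]

theorem aeval_mul_X_pow_mem_reducible {r : ℕ} {P : K[X]} {i j : ℕ} (hP : P.natDegree ≤ i)
    (hj : j + 1 + r * D.N' ≤ D.N + r * D.N) : aeval (MvPolynomial.X 0) P * MvPolynomial.X 1 ^ j ∈
      D.reducible r (i + j + r * D.N') := by
  induction r generalizing i j P with
  | zero =>
    exact reducible_mono (by omega) (D.aeval_mul_X_pow_mem_reducible_of_lt 0 hP (by omega))
  | succ r ih =>
    rcases lt_or_ge j D.N with hjN | hjN
    · exact reducible_mono (by omega) (D.aeval_mul_X_pow_mem_reducible_of_lt _ hP hjN)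
    obtain ⟨s, rfl⟩ := Nat.exists_eq_add_of_le hjN
    have hN : D.N' ≤ D.N := Nat.pow_le_pow_right D.q_pos (Nat.sub_le _ _)
    set c := fun l ↦ (D.thetaPoly (X : K[X])).coeff l
    have hlower : ∑ l ∈ range (D.N' + 1),
        aeval (MvPolynomial.X 0) (P * c l) * MvPolynomial.X 1 ^ (s + l) ∈
          D.reducible r (i + (D.N + s) + (r + 1) * D.N') := by
      refine Submodule.sum_mem _ fun l hl ↦ ?_
      have hl' := mem_range_succ_iff.1 hl
      have hc := natDegree_mul_le_of_le hP (D.natDegree_coeff_thetaPoly_le (hl'.trans hN))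
      refine reducible_mono ?_ (ih hc ?_)
      · rw [add_mul]
        omega
      · rw [add_mul, add_mul] at hj
        omega
    obtain ⟨R, hR, hdvd⟩ := Submodule.neg_mem _ hlower
    refine ⟨R, hR, ?_⟩
    convert dvd_add hdvd (dvd_mul_right D.curve
      (aeval (MvPolynomial.X 0) D.leadCoeff ^ r * aeval (MvPolynomial.X 0) P *
        MvPolynomial.X 1 ^ s)) using 1
    have hsum : ∑ l ∈ range (D.N' + 1),
        aeval (MvPolynomial.X 0 : K[X,Y]) (P * c l) * MvPolynomial.X 1 ^ (s + l) =
          aeval (MvPolynomial.X 0) P * MvPolynomial.X 1 ^ s * ∑ l ∈ range (D.N' + 1),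
            aeval (MvPolynomial.X 0) (c l) * MvPolynomial.X 1 ^ l := by
      rw [mul_sum]
      exact sum_congr rfl fun l _ ↦ by rw [map_mul]; ring
    rw [hsum, curve_eq_leadCoeff_mul_add_sum]
    ring

theorem mem_reducible {r : ℕ} {H : K[X,Y]}
    (hH : H.degreeOf 1 + 1 + r * D.N' ≤ D.N + r * D.N) :
    H ∈ D.reducible r (H.totalDegree + r * D.N') := by
  suffices h : ∑ m ∈ H.support, MvPolynomial.monomial m (H.coeff m) ∈
      D.reducible r (H.totalDegree + r * D.N') by
    rwa [← H.as_sum] at h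
  refine Submodule.sum_mem _ fun m hm ↦ ?_
  have h0 : m 0 + m 1 ≤ H.totalDegree := by
    simpa [Finsupp.sum_fintype] using MvPolynomial.le_totalDegree hm
  have h1 : m 1 ≤ H.degreeOf 1 := MvPolynomial.monomial_le_degreeOf 1 hm
  have hmon : MvPolynomial.monomial m (H.coeff m) =
      aeval (MvPolynomial.X 0) (C (H.coeff m) * X ^ m 0) * MvPolynomial.X 1 ^ m 1 := by
    simp [MvPolynomial.monomial_eq, Finsupp.prod_fintype, mul_assoc, MvPolynomial.algebraMap_eq]
  rw [hmon]
  exact reducible_mono (by omega) (D.aeval_mul_X_pow_mem_reducible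
    (natDegree_C_mul_X_pow_le _ _) (by omega))

end Reduction

section ZeroEstimate

open PowerSeries

variable {L : Type*} [Field L] [Algebra K L]

theorem exists_injective_theta_eq_zero [IsAlgClosed L] {x : K} (hx : x ≠ 0)
    (hlead : D.leadCoeff.eval x ≠ 0) :
    ∃ y : Fin D.N → L, Function.Injective y ∧ ∀ i, D.theta (algebraMap K L x) (y i) = 0 := by
  classical
  set P := D.thetaPoly (algebraMap K L x)
  have hsep : P.Separable := D.separable_thetaPoly ((map_ne_zero _).2 hx)
  have hcard : #P.roots.toFinset = D.N := by
    rw [Multiset.toFinset_card_of_nodup (Polynomial.nodup_roots hsep),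
      ← (IsAlgClosed.splits P).natDegree_eq_card_roots, D.natDegree_thetaPoly hlead]
  refine ⟨fun i ↦ ((equivFinOfCardEq hcard).symm i : L), fun i j h ↦ ?_, fun i ↦ ?_⟩
  · exact (equivFinOfCardEq hcard).symm.injective (Subtype.ext h)
  · rw [← eval_thetaPoly]
    exact Polynomial.isRoot_of_mem_roots
      (Multiset.mem_toFinset.1 ((equivFinOfCardEq hcard).symm i).2)

variable {D}

theorem X_sub_C_pow_dvd_of_forall_isBranch [IsAlgClosed L] {x : K} (hx : x ≠ 0)
    (hlead : D.leadCoeff.eval x ≠ 0) {R : ℕ → Polynomial K} {M : ℕ}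
    (h : ∀ ψ : K[X,Y] →ₐ[K] L⟦X⟧, D.IsBranch ψ (algebraMap K L x) → X ^ M ∣
      ψ (∑ b ∈ range D.N, Polynomial.aeval (MvPolynomial.X 0) (R b) * MvPolynomial.X 1 ^ b))
    {b : ℕ} (hb : b < D.N) : (Polynomial.X - Polynomial.C x) ^ M ∣ R b := by
  obtain ⟨y, hy, hxy⟩ := D.exists_injective_theta_eq_zero (L := L) hx hlead
  choose ψ hψ hψy using fun i ↦ D.exists_isBranch ((map_ne_zero _).2 hx) (hxy i)
  have hR : ∀ i P, ψ i (Polynomial.aeval (MvPolynomial.X 0) P) =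
      Polynomial.aeval (C (algebraMap K L x) + X) P := fun i P ↦ by
    rw [← Polynomial.aeval_algHom_apply, (hψ i).map_X_zero]
  refine X_sub_C_pow_dvd_of_X_pow_dvd_aeval (L := L) ?_
  refine dvd_of_forall_dvd_sum_mul_pow (v := fun i ↦ ψ i (MvPolynomial.X 1))
    (r := fun b : Fin D.N ↦ Polynomial.aeval (C (algebraMap K L x) + X) (R b))
    (fun i j hij ↦ ?_) (fun i ↦ ?_) ⟨b, hb⟩
  · rw [isUnit_iff_constantCoeff, map_sub, hψy, hψy, isUnit_iff_ne_zero, sub_ne_zero]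
    exact hy.ne hij
  · rw [Fin.sum_univ_eq_sum_range (fun b ↦ Polynomial.aeval (C (algebraMap K L x) + X) (R b) *
      ψ i (MvPolynomial.X 1) ^ b)]
    simpa only [map_sum, map_mul, map_pow, hR] using h (ψ i) (hψ i)

theorem curve_dvd_of_forall_isBranch [IsAlgClosed L] {G : Finset K}
    (hG : ∀ x ∈ G, x ≠ 0 ∧ D.leadCoeff.eval x ≠ 0) {H : K[X,Y]} {r M : ℕ}
    (hdegY : H.degreeOf 1 + 1 + r * D.N' ≤ D.N + r * D.N)
    (hdeg : H.totalDegree + r * D.N' < M * #G)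
    (h : ∀ x ∈ G, ∀ ψ : K[X,Y] →ₐ[K] L⟦X⟧, D.IsBranch ψ (algebraMap K L x) →
      X ^ M ∣ ψ H) :
    D.curve ∣ Polynomial.aeval (MvPolynomial.X 0) D.leadCoeff ^ r * H := by
  obtain ⟨R, hR, hdvd⟩ := D.mem_reducible hdegY
  have hzero : ∀ b ∈ range D.N, R b = 0 := fun b hb ↦ by
    refine eq_zero_of_forall_X_sub_C_pow_dvd (fun x hx ↦ ?_) ((hR b).trans_lt hdeg)
    refine X_sub_C_pow_dvd_of_forall_isBranch (L := L) (hG x hx).1 (hG x hx).2 (fun ψ hψ ↦ ?_)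
      (mem_range.1 hb)
    have hψ0 := map_dvd ψ hdvd
    rw [hψ.map_curve, zero_dvd_iff, map_sub, sub_eq_zero] at hψ0
    rw [← hψ0, map_mul]
    exact (h x hx ψ hψ).mul_left _
  rwa [sum_eq_zero fun b hb ↦ by rw [hzero b hb, map_zero, zero_mul], sub_zero] at hdvd

theorem IsBranch.map_eq_zero_of_forall_isBranch {ψ₀ : K[X,Y] →ₐ[K] K⟦X⟧} {x₀ : K}
    (hψ₀ : D.IsBranch ψ₀ x₀) {G : Finset K}
    (hG : ∀ x ∈ G, x ≠ 0 ∧ D.leadCoeff.eval x ≠ 0) {H : K[X,Y]} {r M : ℕ}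
    (hdegY : H.degreeOf 1 + 1 + r * D.N' ≤ D.N + r * D.N)
    (hdeg : H.totalDegree + r * D.N' < M * #G)
    (h : ∀ x ∈ G, ∀ ψ : K[X,Y] →ₐ[K] (AlgebraicClosure K)⟦X⟧,
      D.IsBranch ψ (algebraMap K _ x) → X ^ M ∣ ψ H) :
    ψ₀ H = 0 := by
  have hdvd := map_dvd ψ₀ (curve_dvd_of_forall_isBranch hG hdegY hdeg h)
  rw [hψ₀.map_curve, zero_dvd_iff, map_mul, map_pow, ← Polynomial.aeval_algHom_apply,
    hψ₀.map_X_zero] at hdvd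
  refine (mul_eq_zero.1 hdvd).resolve_left (pow_ne_zero _ ?_)
  exact aeval_C_add_X_ne_zero (L := K) x₀ D.leadCoeff_ne_zero

variable (D) in
theorem card_le_card_filter_add [Fintype K] [DecidableEq K] (m : K) :
    Fintype.card K ≤
      #{x : K | x ≠ 0 ∧ D.leadCoeff.eval x ≠ 0 ∧ D.lin x ≠ m * x ^ D.Q} + 2 * D.N := by
  set T : Polynomial K := D.lin Polynomial.X - Polynomial.C m * Polynomial.X ^ D.Q
  have hT : ∀ x, T.eval x = D.lin x - m * x ^ D.Q := fun x ↦ by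
    have hlin := D.map_lin (Polynomial.aeval x) (Polynomial.X : Polynomial K)
    rw [Polynomial.aeval_X, Polynomial.coe_aeval_eq_eval] at hlin
    simp [T, hlin]
  have hT0 : T ≠ 0 := fun h ↦ by
    have hQ : 1 ≠ D.Q := by have := D.two_le_Q; omega
    have hcoeff := congr_arg (Polynomial.coeff · 1) h
    simp [T, coeff_lin_X_one, Polynomial.coeff_X_pow, hQ, D.a_zero_ne] at hcoeff
  have hTdeg : T.natDegree ≤ D.N := by
    refine (Polynomial.natDegree_sub_le _ _).trans (max_le (D.natDegree_lin_X_le.trans D.F_le_N) ?_)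
    exact (Polynomial.natDegree_C_mul_X_pow_le _ _).trans D.Q_le_N
  have hlead : D.leadCoeff.natDegree ≤ D.N :=
    D.natDegree_leadCoeff_le.trans (Nat.pow_le_pow_right D.q_pos (Nat.sub_le _ _))
  have hcover : (univ : Finset K) ⊆ ({x : K | x ≠ 0 ∧ D.leadCoeff.eval x ≠ 0 ∧
      D.lin x ≠ m * x ^ D.Q} : Finset K) ∪
      (D.leadCoeff.roots.toFinset ∪ T.roots.toFinset) := fun x _ ↦ by
    have hzero : x = 0 → D.lin x = m * x ^ D.Q := by
      rintro rfl
      rw [← mul_linDiv, zero_mul, zero_pow (by have := D.two_le_Q; omega), mul_zero]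
    simp only [mem_union, mem_filter, mem_univ, true_and, Multiset.mem_toFinset,
      Polynomial.mem_roots D.leadCoeff_ne_zero, Polynomial.mem_roots hT0, Polynomial.IsRoot, hT,
      sub_eq_zero]
    tauto
  have hroots : ∀ P : Polynomial K, #P.roots.toFinset ≤ P.natDegree := fun P ↦
    (Multiset.toFinset_card_le _).trans P.card_roots'
  calc Fintype.card K = #(univ : Finset K) := card_univ.symm
    _ ≤ _ + #(D.leadCoeff.roots.toFinset ∪ T.roots.toFinset) :=
      (card_le_card hcover).trans (card_union_le _ _)
    _ ≤ _ + (D.N + D.N) := by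
      gcongr
      exact (card_union_le _ _).trans
        (add_le_add ((hroots _).trans hlead) ((hroots T).trans hTdeg))
    _ = _ := by ring

end ZeroEstimate

end IndexedQPoly

theorem mem_range_algebraMap_of_pow_card_eq {K L : Type*} [Field K] [Fintype K] [Field L]
    [Algebra K L] {z : L} (hz : z ^ Fintype.card K = z) : z ∈ Set.range (algebraMap K L) := by
  have hsplits : (Polynomial.X ^ Fintype.card K - Polynomial.X : Polynomial K).Splits := by
    rw [Polynomial.splits_iff_card_roots, FiniteField.roots_X_pow_card_sub_X,
      FiniteField.X_pow_card_sub_X_natDegree_eq K Fintype.one_lt_card]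
    exact card_univ
  refine hsplits.mem_range_of_isRoot
    (FiniteField.X_pow_card_sub_X_ne_zero K Fintype.one_lt_card) ?_
  simp [hz]

namespace IndexedQPoly

variable {K : Type*} [Field K] (D : IndexedQPoly K)

section AuxiliaryDegree

theorem totalDegree_auxTerm_le {κ : ℕ} (hκ : 0 < κ) {v : ℕ → K[X,Y]} {S i : ℕ}
    (hv : ∀ j ≤ i, (v j).totalDegree + (D.N + 2) * j ≤ S) (b : ℕ) {l : ℕ} (hl : l ≤ i) :
    (D.auxTerm κ v i b l).totalDegree ≤ κ * (b + (i - l)) + (S + (D.F + D.Q)) := by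
  set s : K[X,Y] := MvPolynomial.X 0 ^ κ - MvPolynomial.X 0
  have hs : s.totalDegree ≤ κ := (MvPolynomial.totalDegree_sub _ _).trans <| by
    rw [MvPolynomial.totalDegree_X_pow, MvPolynomial.totalDegree_X, max_eq_left hκ]
  have haux := D.totalDegree_auxCoeff_le hv b l
  have hQN := Nat.mul_le_mul_right l (Nat.add_le_add_right D.Q_le_N 2)
  have hvl := hv l hl
  calc (D.auxTerm κ v i b l).totalDegree
      ≤ (D.Q + 2) * l + (D.auxCoeff v i b l).totalDegree + (i - l) * s.totalDegree + b * κ := by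
        rw [auxTerm, ← pow_mul]
        refine (MvPolynomial.totalDegree_mul _ _).trans (add_le_add ?_ ?_)
        · refine (MvPolynomial.totalDegree_mul _ _).trans
            (add_le_add ?_ (MvPolynomial.totalDegree_pow _ _))
          refine (MvPolynomial.totalDegree_mul _ _).trans (Nat.add_le_add_right ?_ _)
          rw [MvPolynomial.totalDegree_X_pow]
        · rw [MvPolynomial.totalDegree_X_pow]
    _ ≤ (S + (D.F + D.Q)) + (i - l) * κ + b * κ := by
        have hmul := Nat.mul_le_mul_left (i - l) hs
        omega
    _ = κ * (b + (i - l)) + (S + (D.F + D.Q)) := by ring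

theorem degreeOf_one_auxTerm_le (κ : ℕ) {v : ℕ → K[X,Y]} {S i : ℕ}
    (hv : ∀ j ≤ i, (v j).totalDegree + (D.N + 2) * j ≤ S) (b l : ℕ) :
    (D.auxTerm κ v i b l).degreeOf 1 ≤ κ * b + (S + (D.F + D.Q)) := by
  have hpow : ∀ m, (MvPolynomial.X 0 ^ m : K[X,Y]).degreeOf 1 = 0 := fun m ↦
    MvPolynomial.degreeOf_X_pow_of_ne _ one_ne_zero
  set s : K[X,Y] := MvPolynomial.X 0 ^ κ - MvPolynomial.X 0
  have hs : s.degreeOf 1 = 0 := Nat.le_zero.1 <| (MvPolynomial.degreeOf_sub_le _ _ _).trans <| by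
    rw [hpow, MvPolynomial.degreeOf_X_of_ne one_ne_zero, max_self]
  have haux := (MvPolynomial.degreeOf_le_totalDegree (D.auxCoeff v i b l) 1).trans
    (D.totalDegree_auxCoeff_le hv b l)
  calc (D.auxTerm κ v i b l).degreeOf 1
      ≤ (D.auxCoeff v i b l).degreeOf 1 + (i - l) * s.degreeOf 1 + b * κ := by
        rw [auxTerm, ← pow_mul]
        refine (MvPolynomial.degreeOf_mul_le _ _ _).trans (add_le_add ?_ ?_)
        · refine (MvPolynomial.degreeOf_mul_le _ _ _).trans
            (add_le_add ?_ (MvPolynomial.degreeOf_pow_le _ _ _))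
          refine (MvPolynomial.degreeOf_mul_le _ _ _).trans_eq ?_
          rw [hpow, zero_add]
        · rw [MvPolynomial.degreeOf_X_self_pow]
    _ ≤ κ * b + (S + (D.F + D.Q)) := by
        rw [hs, mul_zero, mul_comm b]
        omega

/-- The auxiliary polynomial `∑ b < N, ∑ l ≤ i, auxTerm κ v i b l` without the terms with
`l < b + ν`, which are made to vanish on a component of the curve by the choice of `v`. -/
noncomputable def truncatedAux (κ : ℕ) (v : ℕ → K[X,Y]) (i ν : ℕ) : K[X,Y] :=
  ∑ b ∈ range D.N, ∑ l ∈ Ico (b + ν) (i + 1), D.auxTerm κ v i b l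

variable {D}

theorem map_truncatedAux {B : Type*} [CommRing B] [Algebra K B] {φ : K[X,Y] →ₐ[K] B}
    {v : ℕ → K[X,Y]} {i ν : ℕ} (h : ∀ b < D.N, ∀ l < b + ν, φ (D.auxCoeff v i b l) = 0) (κ : ℕ) :
    φ (D.truncatedAux κ v i ν) =
      φ (∑ b ∈ range D.N, ∑ l ∈ range (i + 1), D.auxTerm κ v i b l) := by
  simp only [truncatedAux, map_sum]
  refine sum_congr rfl fun b hb ↦ ?_
  rw [range_eq_Ico]
  refine sum_subset (Ico_subset_Ico_left (Nat.zero_le _)) fun l hl hlν ↦ ?_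
  rw [mem_Ico] at hl hlν
  simp only [auxTerm, map_mul, h b (mem_range.1 hb) l (by omega), mul_zero, zero_mul]

theorem totalDegree_truncatedAux_add_le {κ : ℕ} (hκ : 0 < κ) {v : ℕ → K[X,Y]} {S i ν : ℕ}
    (hv : ∀ j ≤ i, (v j).totalDegree + (D.N + 2) * j ≤ S) (hν : ν ≤ i) :
    (D.truncatedAux κ v i ν).totalDegree + κ * ν ≤ κ * i + (S + (D.F + D.Q)) := by
  suffices (D.truncatedAux κ v i ν).totalDegree ≤ κ * (i - ν) + (S + (D.F + D.Q)) by
    have : κ * (i - ν) + κ * ν = κ * i := by rw [← mul_add, Nat.sub_add_cancel hν]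
    omega
  refine MvPolynomial.totalDegree_finsetSum_le fun b _ ↦
    MvPolynomial.totalDegree_finsetSum_le fun l hl ↦ ?_
  rw [mem_Ico] at hl
  refine (D.totalDegree_auxTerm_le hκ hv b (by omega)).trans ?_
  gcongr
  omega

theorem degreeOf_one_truncatedAux_le (κ : ℕ) {v : ℕ → K[X,Y]} {S i : ℕ}
    (hv : ∀ j ≤ i, (v j).totalDegree + (D.N + 2) * j ≤ S) (ν : ℕ) :
    (D.truncatedAux κ v i ν).degreeOf 1 ≤ κ * (D.N - 1) + (S + (D.F + D.Q)) := by
  refine (MvPolynomial.degreeOf_sum_le _ _ _).trans (Finset.sup_le fun b hb ↦ ?_)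
  refine (MvPolynomial.degreeOf_sum_le _ _ _).trans (Finset.sup_le fun l _ ↦ ?_)
  rw [mem_range] at hb
  refine (D.degreeOf_one_auxTerm_le κ hv b l).trans ?_
  gcongr
  omega

theorem degreeOf_one_mul_truncatedAux_le {κ κ' : ℕ} (hκ : κ = D.N' * κ') {ε : K[X,Y]}
    (hε : ε.totalDegree ≤ D.F + D.Q) {v : ℕ → K[X,Y]} {S i ν W : ℕ}
    (hv : ∀ j ≤ i, (v j).totalDegree + (D.N + 2) * j ≤ S) (hW : W = S + 2 * (D.F + D.Q))
    (hν : D.N ≤ (D.q - 1) * ν + 1) :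
    (ε * D.truncatedAux κ v i ν).degreeOf 1 + 1 + (ν * κ' + W) * D.N' ≤
      D.N + (ν * κ' + W) * D.N := by
  obtain ⟨z, hz⟩ : ∃ z, D.q = z + 2 := ⟨D.q - 2, by have := D.two_le_q; omega⟩
  have hN : 0 < D.N := D.q_pow_pos _
  have hN' : 0 < D.N' := D.q_pow_pos _
  have hmul := MvPolynomial.degreeOf_mul_le 1 ε (D.truncatedAux κ v i ν)
  have hεY := (MvPolynomial.degreeOf_le_totalDegree ε 1).trans hε
  have haux := degreeOf_one_truncatedAux_le κ hv ν
  have hκN : κ * (D.N - 1) ≤ κ * ((z + 1) * ν) := Nat.mul_le_mul_left κ (by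
    rw [hz, show z + 2 - 1 = z + 1 by omega] at hν
    omega)
  have hWN' : W ≤ W * D.N' := Nat.le_mul_of_pos_right _ hN'
  have hκz : κ * ((z + 1) * ν) + W * D.N' ≤ (ν * κ' + W) * ((z + 1) * D.N') := by
    rw [hκ]
    nlinarith [Nat.zero_le (z * (W * D.N'))]
  have hsplit : (ν * κ' + W) * D.N = (ν * κ' + W) * D.N' + (ν * κ' + W) * ((z + 1) * D.N') := by
    rw [D.N_eq, hz]
    ring
  omega

theorem totalDegree_mul_truncatedAux_lt {κ κ' : ℕ} (hκ₀ : 0 < κ) (hκ : κ = D.N' * κ') {ε : K[X,Y]}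
    (hε : ε.totalDegree ≤ D.F + D.Q) {v : ℕ → K[X,Y]} {S i ν β W g : ℕ} (hνi : ν ≤ i) (hi : i < β)
    (hv : ∀ j ≤ i, (v j).totalDegree + (D.N + 2) * j ≤ S) (hW : W = S + 2 * (D.F + D.Q))
    (hκW : W * (D.N' + 1) + β * (2 * D.N) < κ) (hg : κ ≤ g + 2 * D.N) :
    (ε * D.truncatedAux κ v i ν).totalDegree + (ν * κ' + W) * D.N' < (i + 1) * g := by
  have hmul := MvPolynomial.totalDegree_mul ε (D.truncatedAux κ v i ν)
  have haux := totalDegree_truncatedAux_add_le hκ₀ hv hνi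
  have hiN : (i + 1) * (2 * D.N) ≤ β * (2 * D.N) := Nat.mul_le_mul_right _ hi
  have hgN : (i + 1) * κ ≤ (i + 1) * g + (i + 1) * (2 * D.N) := by
    rw [← mul_add]
    exact Nat.mul_le_mul_left _ hg
  have hκν : (ν * κ' + W) * D.N' = κ * ν + W * D.N' := by
    rw [hκ]
    ring
  rw [mul_add_one] at hκW
  rw [add_one_mul, mul_comm i κ] at hgN
  omega

end AuxiliaryDegree

section Contradiction

open PowerSeries

variable {D} [Fintype K] {e ε : K[X,Y]} {m₀ : K}

/-- Where `y₁` lies in `K` the branch is a line through the origin, so that `ε` vanishes on it;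
elsewhere `y₁ ^ |K|` is a second root of `theta x₁`. -/
theorem IsBranch.X_pow_dvd_map_mul_truncatedAux {L : Type*} [Field L] [Algebra K L]
    {ψ : K[X,Y] →ₐ[K] L⟦X⟧} {x₁ : K} (hψ : D.IsBranch ψ (algebraMap K L x₁)) (hx₁ : x₁ ≠ 0)
    (hcurve : D.curve = e * ε)
    (hε : ∀ c, c ^ D.q = c → MvPolynomial.X 1 - MvPolynomial.C c * MvPolynomial.X 0 ∣ ε)
    (hroots : ∀ y₁ : K, D.theta x₁ y₁ = 0 → ∃ c, c ^ D.q = c ∧ y₁ = c * x₁)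
    {v : ℕ → K[X,Y]} {i ν : ℕ} (hi : i < Fintype.card K)
    (hv : ∀ b < D.N, ∀ l < b + ν, e ∣ D.auxCoeff v i b l) :
    X ^ (i + 1) ∣ ψ (ε * D.truncatedAux (Fintype.card K) v i ν) := by
  have hx₁' : algebraMap K L x₁ ≠ 0 := (map_ne_zero _).2 hx₁
  by_cases hψε : ψ ε = 0
  · rw [map_mul, hψε, zero_mul]
    exact dvd_zero _
  have hψe : ψ e = 0 := by
    have h := hψ.map_curve
    rw [hcurve, map_mul] at h
    exact (mul_eq_zero.1 h).resolve_right hψε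
  have hψv : ∀ b < D.N, ∀ l < b + ν, ψ (D.auxCoeff v i b l) = 0 := fun b hb l hl ↦ by
    have h := map_dvd ψ (hv b hb l hl)
    rwa [hψe, zero_dvd_iff] at h
  rw [map_mul, map_truncatedAux hψv]
  refine (hψ.X_pow_dvd_map_sum_auxTerm hx₁' (by rw [← map_pow, FiniteField.pow_card]) ?_ v
    hi).mul_left _
  intro hy₁
  obtain ⟨y₁, hy₁⟩ := mem_range_algebraMap_of_pow_card_eq hy₁
  have htheta : D.theta x₁ y₁ = 0 := by
    refine (algebraMap K L).injective ?_
    have h := D.map_theta (Algebra.ofId K L) x₁ y₁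
    simp only [Algebra.ofId_apply] at h
    rw [h, hy₁, hψ.theta_constantCoeff, map_zero]
  obtain ⟨c, hc, rfl⟩ := hroots y₁ htheta
  refine hψε (zero_dvd_iff.1 ?_)
  have h := map_dvd ψ (hε c hc)
  rwa [map_sub, map_mul, ← MvPolynomial.algebraMap_eq, AlgHom.commutes,
    hψ.map_X_one_eq hx₁' hc (by rw [← hy₁, map_mul]), sub_self] at h

theorem IsBranch.map_mul_truncatedAux_eq_zero {ψ : K[X,Y] →ₐ[K] K⟦X⟧} {x₀ : K}
    (hψ : D.IsBranch ψ x₀) {n : ℕ} (hcard : Fintype.card K = D.q ^ n) (hn : max D.k D.t ≤ n)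
    {ν β S : ℕ} (hν : D.N ≤ (D.q - 1) * ν + 1)
    (hzeros : (S + 2 * (D.F + D.Q)) * (D.N' + 1) + β * (2 * D.N) < Fintype.card K)
    (hcurve : D.curve = e * ε) (hdeg : ε.totalDegree ≤ D.F + D.Q)
    (hε : ∀ c, c ^ D.q = c → MvPolynomial.X 1 - MvPolynomial.C c * MvPolynomial.X 0 ∣ ε)
    (hroots : ∀ x₁ y₁ : K, x₁ ≠ 0 → D.theta x₁ y₁ = 0 → D.lin x₁ ≠ m₀ * x₁ ^ D.Q →
      ∃ c, c ^ D.q = c ∧ y₁ = c * x₁)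
    {v : ℕ → K[X,Y]} {i : ℕ} (hi : i < β) (hvS : ∀ j < β, (v j).totalDegree + (D.N + 2) * j ≤ S)
    (hv : ∀ b < D.N, ∀ l < b + ν, e ∣ D.auxCoeff v i b l) :
    ψ (ε * D.truncatedAux (Fintype.card K) v i ν) = 0 := by
  classical
  rcases lt_or_ge i ν with hiν | hνi
  · have hempty : ∀ b, Ico (b + ν) (i + 1) = ∅ := fun b ↦ Ico_eq_empty (by omega)
    simp only [truncatedAux, hempty, sum_empty, sum_const_zero, mul_zero, map_zero]
  have hvi : ∀ j ≤ i, (v j).totalDegree + (D.N + 2) * j ≤ S := fun j hj ↦ hvS j (by omega)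
  obtain ⟨κ', hκ'⟩ : D.N' ∣ Fintype.card K := hcard ▸ pow_dvd_pow _ (by omega)
  have hiK : i < Fintype.card K := by
    have := Nat.le_mul_of_pos_right β (Nat.mul_pos two_pos (D.q_pow_pos (max D.k D.t)))
    exact (hi.trans_le this).trans_le ((Nat.le_add_left _ _).trans hzeros.le)
  refine hψ.map_eq_zero_of_forall_isBranch (M := i + 1)
    (G := {x : K | x ≠ 0 ∧ D.leadCoeff.eval x ≠ 0 ∧ D.lin x ≠ m₀ * x ^ D.Q})
    (fun x hx ↦ ?_) (degreeOf_one_mul_truncatedAux_le hκ' hdeg hvi rfl hν)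
    (totalDegree_mul_truncatedAux_lt Fintype.card_pos hκ' hdeg hνi hi hvi rfl hzeros
      (D.card_le_card_filter_add m₀)) fun x₁ hx₁ φ hφ ↦ ?_
  · simp only [mem_filter, mem_univ, true_and] at hx
    exact ⟨hx.1, hx.2.1⟩
  · simp only [mem_filter, mem_univ, true_and] at hx₁
    exact hφ.X_pow_dvd_map_mul_truncatedAux hx₁.1 hcurve hε
      (fun y₁ hy₁ ↦ hroots x₁ y₁ hx₁.1 hy₁ hx₁.2.2) hiK hv

/-- Stepanov's argument on the component of `curve` through `(x₀, y₀)`: `hzeros` makes a truncated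
auxiliary function vanish there for having too many zeros, while `hbezout` makes it nonzero. -/
theorem exists_theta_eq_zero {n : ℕ} (hcard : Fintype.card K = D.q ^ n) (hn : max D.k D.t ≤ n)
    {ν β S : ℕ} (hβ : β + D.N = D.N * D.N + 2 * D.N * ν)
    (hS : S = (D.N + 2) * β + 2 * (D.F + D.Q)) (hν : D.N ≤ (D.q - 1) * ν + 1)
    (hbezout : (D.F + D.Q) * (S + β + D.F + D.Q) < Fintype.card K)
    (hzeros : (S + 2 * (D.F + D.Q)) * (D.N' + 1) + β * (2 * D.N) < Fintype.card K)
    {x₀ y₀ : K} (hx₀ : x₀ ≠ 0) (hx₀m : D.lin x₀ = m₀ * x₀ ^ D.Q)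
    (hy₀m : D.lin y₀ = m₀ * y₀ ^ D.Q) (hxy : ∀ c, c ^ D.q = c → y₀ ≠ c * x₀) :
    ∃ x₁ y₁ : K, x₁ ≠ 0 ∧ D.theta x₁ y₁ = 0 ∧ D.lin x₁ ≠ m₀ * x₁ ^ D.Q ∧
      ∀ c, c ^ D.q = c → y₁ ≠ c * x₁ := by
  by_contra! hroots
  have htheta : D.theta x₀ y₀ = 0 := by
    rw [theta, hx₀m, hy₀m]
    ring
  obtain ⟨ψ, hψ, hψy⟩ := D.exists_isBranch hx₀ htheta
  obtain ⟨e, ε, he, hcurve, hψe, hψε, hε⟩ := hψ.exists_component fun c hc h ↦ hxy c hc <| by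
    rw [← hψy, h, map_mul, ← MvPolynomial.algebraMap_eq, AlgHom.commutes, hψ.map_X_zero]
    simp
  have hε0 : ε ≠ 0 := fun h ↦ hψε (by rw [h, map_zero])
  have hdeg : e.totalDegree + ε.totalDegree ≤ D.F + D.Q := by
    rw [← MvPolynomial.totalDegree_mul_of_isDomain he.ne_zero hε0, ← hcurve]
    exact D.totalDegree_curve_le
  have hker := ker_eq_span_of_prime hψ.map_X_zero he hψe
  have hβ0 : 0 < β := by
    have hN := D.two_le_F.trans D.F_le_N
    nlinarith [Nat.zero_le (D.N * ν)]
  obtain ⟨i, hi, v, hvS, hvi, hv⟩ := exists_map_auxCoeff_eq_zero he.ne_zero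
    (totalDegree_pos_of_prime he hψe) hker (by omega) hβ0 hβ hS
  refine hψ.map_sum_auxTerm_ne_zero (fun j hj ↦ hvS j (by omega)) hvi (fun P hP hdvd ↦ ?_) ?_
  · by_contra hψP
    have h := le_totalDegree_mul_of_X_pow_dvd hψ.map_X_zero he hψe hψP hP hdvd
    have hmul : e.totalDegree * (S + (D.F + D.Q - 1) + i) ≤
        (D.F + D.Q) * (S + β + D.F + D.Q) := Nat.mul_le_mul (by omega) (by omega)
    omega
  · have hev : ∀ b < D.N, ∀ l < b + ν, e ∣ D.auxCoeff v i b l := fun b hb l hl ↦ by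
      rw [← Ideal.mem_span_singleton, ← hker]
      exact hv b hb l hl
    have hprod := hψ.map_mul_truncatedAux_eq_zero hcard hn hν hzeros hcurve (by omega) hε
      hroots hi hvS hev
    rw [map_mul, map_truncatedAux hv] at hprod
    exact (mul_eq_zero.1 hprod).resolve_left hψε

end Contradiction

section Numerics

theorem mul_add_lt_of_three_mul_le {N u s β M : ℕ} (hN : 9 ≤ N) (hu : 3 * u ≤ N) (hs : s ≤ N + u)
    (hβ : β ≤ 2 * N ^ 2) (hM : 4 * N ^ 4 ≤ M) :
    s * ((N + 2) * β + 2 * s + β + s) < M ∧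
      ((N + 2) * β + 2 * s + 2 * s) * (u + 1) + β * (2 * N) < M := by
  have hNβ : (N + 2) * β ≤ (N + 2) * (2 * N ^ 2) := Nat.mul_le_mul_left _ hβ
  obtain ⟨w, hw⟩ := Nat.exists_eq_add_of_le hN
  constructor
  · have hprod := Nat.mul_le_mul (show 3 * s ≤ 4 * N by omega)
      (show (N + 2) * β + 2 * s + β + s ≤ (N + 2) * (2 * N ^ 2) + 2 * N ^ 2 + 4 * N by omega)
    have hpoly : 4 * N * ((N + 2) * (2 * N ^ 2) + 2 * N ^ 2 + 4 * N) < 3 * (4 * N ^ 4) := by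
      rw [hw]
      ring_nf
      omega
    rw [mul_assoc] at hprod
    omega
  · have hprod := Nat.mul_le_mul (show (N + 2) * β + 2 * s + 2 * s ≤
      (N + 2) * (2 * N ^ 2) + 6 * N by omega) (show 3 * (u + 1) ≤ N + 3 by omega)
    have hβN := Nat.mul_le_mul_right (2 * N) hβ
    have hpoly : ((N + 2) * (2 * N ^ 2) + 6 * N) * (N + 3) + 3 * (2 * N ^ 2 * (2 * N)) <
        3 * (4 * N ^ 4) := by
      rw [hw]
      ring_nf
      omega
    rw [mul_left_comm] at hprod
    omega

theorem mul_add_lt_of_two_mul_le {N u s β M : ℕ} (hN : 4 ≤ N) (hu : 2 * u ≤ N) (hs : s ≤ N + u)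
    (hβ : β ≤ 3 * N ^ 2) (hM : 16 * N ^ 4 ≤ M) :
    s * ((N + 2) * β + 2 * s + β + s) < M ∧
      ((N + 2) * β + 2 * s + 2 * s) * (u + 1) + β * (2 * N) < M := by
  have hNβ : (N + 2) * β ≤ (N + 2) * (3 * N ^ 2) := Nat.mul_le_mul_left _ hβ
  obtain ⟨w, hw⟩ := Nat.exists_eq_add_of_le hN
  constructor
  · have hprod := Nat.mul_le_mul (show 2 * s ≤ 3 * N by omega)
      (show (N + 2) * β + 2 * s + β + s ≤ (N + 2) * (3 * N ^ 2) + 3 * N ^ 2 + 5 * N by omega)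
    have hpoly : 3 * N * ((N + 2) * (3 * N ^ 2) + 3 * N ^ 2 + 5 * N) < 2 * (16 * N ^ 4) := by
      rw [hw]
      ring_nf
      omega
    rw [mul_assoc] at hprod
    omega
  · have hprod := Nat.mul_le_mul (show (N + 2) * β + 2 * s + 2 * s ≤
      (N + 2) * (3 * N ^ 2) + 6 * N by omega) (show 2 * (u + 1) ≤ N + 2 by omega)
    have hβN := Nat.mul_le_mul_right (2 * N) hβ
    have hpoly : ((N + 2) * (3 * N ^ 2) + 6 * N) * (N + 2) + 2 * (3 * N ^ 2 * (2 * N)) <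
        2 * (16 * N ^ 4) := by
      rw [hw]
      ring_nf
      omega
    rw [mul_left_comm] at hprod
    omega

theorem exists_parameters {M : ℕ} (hM : (3 ≤ D.q ∧ 4 * D.N ^ 4 ≤ M) ∨ 16 * D.N ^ 4 ≤ M) :
    ∃ ν β S, β + D.N = D.N * D.N + 2 * D.N * ν ∧ S = (D.N + 2) * β + 2 * (D.F + D.Q) ∧
      D.N ≤ (D.q - 1) * ν + 1 ∧ (D.F + D.Q) * (S + β + D.F + D.Q) < M ∧
      (S + 2 * (D.F + D.Q)) * (D.N' + 1) + β * (2 * D.N) < M := by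
  obtain ⟨ν, hν⟩ : D.q - 1 ∣ D.N - 1 := by
    have h := Nat.sub_dvd_pow_sub_pow D.q 1 (max D.k D.t)
    rwa [one_pow] at h
  have hq := D.two_le_q
  have hqN' := D.q_le_N'
  have hN := D.N_eq
  have hqq : D.q * D.q ≤ D.N := hN ▸ Nat.mul_le_mul_left _ hqN'
  have hs : D.F + D.Q ≤ D.N + D.N' := by
    rcases D.max_min_F_Q with ⟨hF, hQ⟩ | ⟨hQ, hF⟩ <;> omega
  have hNN : D.N ≤ D.N * D.N := Nat.le_mul_self _
  refine ⟨ν, D.N * D.N + 2 * D.N * ν - D.N, _, by omega, rfl, by omega, ?_⟩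
  rw [add_assoc _ D.F D.Q]
  rcases hM with ⟨hq3, hM⟩ | hM
  · have hνN : 2 * ν ≤ D.N := by
      have := Nat.mul_le_mul_right ν (show 2 ≤ D.q - 1 by omega)
      omega
    refine mul_add_lt_of_three_mul_le ((Nat.mul_le_mul hq3 hq3).trans hqq)
      (hN ▸ Nat.mul_le_mul_right _ hq3) hs ?_ hM
    have := Nat.mul_le_mul_right D.N hνN
    rw [Nat.sub_le_iff_le_add]
    nlinarith
  · have hνN : ν ≤ D.N := by
      have := Nat.mul_le_mul_right ν (show 1 ≤ D.q - 1 by omega)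
      omega
    refine mul_add_lt_of_two_mul_le ((Nat.mul_le_mul hq hq).trans hqq)
      (hN ▸ Nat.mul_le_mul_right _ hq) hs ?_ hM
    have := Nat.mul_le_mul_left D.N hνN
    rw [Nat.sub_le_iff_le_add]
    nlinarith

end Numerics

end IndexedQPoly

theorem sq_natCard_le_natCard_iff {𝔽 V : Type*} [Field 𝔽] [Finite 𝔽] [AddCommGroup V] [Module 𝔽 V]
    [Module.Finite 𝔽 V] :
    Nat.card 𝔽 ^ 2 ≤ Nat.card V ↔ ∃ x y : V, x ≠ 0 ∧ ∀ c : 𝔽, c • x ≠ y := by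
  rw [Module.natCard_eq_pow_finrank (K := 𝔽) (V := V),
    Nat.pow_le_pow_iff_right Finite.one_lt_card]
  constructor
  · intro h
    have : Nontrivial V := Module.nontrivial_of_finrank_pos (R := 𝔽) (by omega)
    obtain ⟨x, hx⟩ := exists_ne (0 : V)
    obtain ⟨y, hxy⟩ := exists_linearIndependent_pair_of_one_lt_finrank (R := 𝔽) (by omega) hx
    exact ⟨x, y, hx, (LinearIndependent.pair_iff' hx).1 hxy⟩
  · rintro ⟨x, y, hx, hxy⟩
    simpa using ((LinearIndependent.pair_iff' hx).2 hxy).fintype_card_le_finrank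

theorem exists_algebra_natCard_eq (K : Type*) [Field K] [Fintype K] {p e n : ℕ} [Fact p.Prime]
    [CharP K p] (he : e ≠ 0) (hcard : Fintype.card K = (p ^ e) ^ n) :
    ∃ (𝔽 : Type) (_ : Field 𝔽) (_ : Fintype 𝔽) (_ : Algebra 𝔽 K), Fintype.card 𝔽 = p ^ e := by
  let : Algebra (ZMod p) K := ZMod.algebra K p
  have hfinrank : Module.finrank (ZMod p) K = e * n := by
    refine Nat.pow_right_injective (Fact.out : p.Prime).two_le ?_
    change p ^ Module.finrank (ZMod p) K = p ^ (e * n)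
    rw [FiniteField.pow_finrank_eq_card, hcard, pow_mul]
  obtain ⟨φ⟩ := FiniteField.nonempty_algHom_of_finrank_dvd (F := ZMod p) (K := GaloisField p e)
    (L := K) (by rw [hfinrank, GaloisField.finrank p he]; exact Dvd.intro _ rfl)
  exact ⟨GaloisField p e, inferInstance, Fintype.ofFinite _, φ.toRingHom.toAlgebra, by
    rw [Fintype.card_eq_nat_card, GaloisField.card p e he]⟩

namespace IndexedQPoly

variable {K : Type*} [Field K] (D : IndexedQPoly K)

section Weight

/-- The kernel of `z ↦ lin z - m * z ^ Q`, as a vector space over the field with `q` elements. -/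
def kernel (𝔽 : Type*) [Field 𝔽] [Fintype 𝔽] [Algebra 𝔽 K] (hq : Fintype.card 𝔽 = D.q) (m : K) :
    Submodule 𝔽 K where
  carrier := {z | D.lin z = m * z ^ D.Q}
  add_mem' {x y} hx hy := by
    rw [Set.mem_ofPred_eq] at *
    rw [lin_add, hx, hy, Q, add_pow_q_pow, mul_add]
  zero_mem' := by
    rw [Set.mem_ofPred_eq, Q, zero_pow (D.q_pow_pos D.t).ne', mul_zero]
    simpa using D.lin_mul_of_pow_q (zero_pow D.q_pos.ne') (0 : K)
  smul_mem' c x hx := by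
    have hc : algebraMap 𝔽 K c ^ D.q = algebraMap 𝔽 K c := by
      rw [← map_pow, ← hq, FiniteField.pow_card]
    rw [Set.mem_ofPred_eq] at *
    rw [Algebra.smul_def, D.lin_mul_of_pow_q hc, hx, mul_pow, Q, pow_pow_eq_self hc]
    ring

theorem sq_le_natCard_iff [Fintype K] {n : ℕ} (hcard : Fintype.card K = D.q ^ n) (m : K) :
    D.q ^ 2 ≤ Nat.card {z : K // D.lin z = m * z ^ D.Q} ↔
      ∃ x y : K, x ≠ 0 ∧ D.lin x = m * x ^ D.Q ∧ D.lin y = m * y ^ D.Q ∧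
        ∀ c, c ^ D.q = c → y ≠ c * x := by
  have := D.charP
  have : Fact D.p.Prime := ⟨D.prime_p⟩
  obtain ⟨𝔽, _, _, _, hq⟩ := exists_algebra_natCard_eq K D.e_pos.ne' hcard
  have hscalars : ∀ x y : K, (∀ c, c ^ D.q = c → y ≠ c * x) ↔ ∀ c : 𝔽, c • x ≠ y := by
    refine fun x y ↦ ⟨fun h c hc ↦ h (algebraMap 𝔽 K c) ?_ ?_, fun h c hc ↦ ?_⟩
    · rw [← map_pow, q, ← hq, FiniteField.pow_card]
    · rw [← hc, Algebra.smul_def]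
    · rw [q, ← hq] at hc
      obtain ⟨c, rfl⟩ := mem_range_algebraMap_of_pow_card_eq hc
      rw [← Algebra.smul_def]
      exact (h c).symm
  have h := sq_natCard_le_natCard_iff (𝔽 := 𝔽) (V := D.kernel 𝔽 hq m)
  rw [Nat.card_eq_fintype_card (α := 𝔽), hq] at h
  refine h.trans ⟨?_, ?_⟩
  · rintro ⟨x, y, hx, hxy⟩
    exact ⟨x, y, by simpa using hx, x.2, y.2, (hscalars _ _).2 fun c hc ↦ hxy c (Subtype.ext hc)⟩
  · rintro ⟨x, y, hx, hxm, hym, hxy⟩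
    exact ⟨⟨x, hxm⟩, ⟨y, hym⟩, fun h ↦ hx (congrArg Subtype.val h),
      fun c hc ↦ (hscalars x y).1 hxy c (congrArg Subtype.val hc)⟩

theorem exists_ne_sq_le_natCard [Fintype K] {n : ℕ} (hcard : Fintype.card K = D.q ^ n)
    (hsize : (3 ≤ D.q ∧ 4 * D.N ^ 4 ≤ D.q ^ n) ∨ 16 * D.N ^ 4 ≤ D.q ^ n) {m₀ : K}
    (hm₀ : D.q ^ 2 ≤ Nat.card {z : K // D.lin z = m₀ * z ^ D.Q}) :
    ∃ m ≠ m₀, D.q ^ 2 ≤ Nat.card {z : K // D.lin z = m * z ^ D.Q} := by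
  obtain ⟨ν, β, S, hβ, hS, hν, hbezout, hzeros⟩ := D.exists_parameters hsize
  obtain ⟨x₀, y₀, hx₀, hx₀m, hy₀m, hxy₀⟩ := (D.sq_le_natCard_iff hcard m₀).1 hm₀
  have hn : max D.k D.t ≤ n := by
    refine (Nat.pow_le_pow_iff_right D.two_le_q).1 (?_ : D.N ≤ D.q ^ n)
    have := Nat.le_self_pow (show 4 ≠ 0 by norm_num) D.N
    omega
  obtain ⟨x₁, y₁, hx₁, htheta, hne, hxy₁⟩ := D.exists_theta_eq_zero hcard hn hβ hS hν
    (hcard ▸ hbezout) (hcard ▸ hzeros) hx₀ hx₀m hy₀m hxy₀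
  have hx₁Q : x₁ ^ D.Q ≠ 0 := pow_ne_zero _ hx₁
  have hx₁m : D.lin x₁ = D.lin x₁ / x₁ ^ D.Q * x₁ ^ D.Q := (div_mul_cancel₀ _ hx₁Q).symm
  refine ⟨D.lin x₁ / x₁ ^ D.Q, fun h ↦ hne (h ▸ hx₁m),
    (D.sq_le_natCard_iff hcard _).2 ⟨x₁, y₁, hx₁, hx₁m, ?_, hxy₁⟩⟩
  rw [div_mul_eq_mul_div, eq_div_iff hx₁Q]
  exact (sub_eq_zero.1 htheta).symm

end Weight

end IndexedQPoly

/-- The weight of `m` for the `q`-polynomial with coefficients `a 0, …, a k` and the index `t`: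
the dimension over the field with `q` elements of the kernel of
`x ↦ ∑ j ≤ k, a j * x ^ q ^ j - m * x ^ q ^ t`, read off from its cardinality. -/
noncomputable def weight {K : Type*} [Field K] (q k t : ℕ) (a : ℕ → K)
    (m : K) : ℕ :=
  Nat.log q (Nat.card {x : K // ∑ j ∈ range (k + 1), a j * x ^ q ^ j = m * x ^ q ^ t})

section Adjoint

variable {K : Type*} [Field K] [Finite K] {p : ℕ} [Fact p.Prime]

theorem trace_pow_char_pow [Algebra (ZMod p) K] (z : K) (i : ℕ) :
    Algebra.trace (ZMod p) K (z ^ p ^ i) = Algebra.trace (ZMod p) K z := by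
  induction i with
  | zero => rw [pow_zero, pow_one]
  | succ i ih =>
    rw [pow_succ, pow_mul, ← ih, ← Algebra.trace_eq_of_algEquiv
      (FiniteField.frobeniusAlgEquivOfAlgebraic (ZMod p) K) (z ^ p ^ i),
      FiniteField.coe_frobeniusAlgEquivOfAlgebraic, ZMod.card]

/-- Both sides count, up to the factor `|K|`, the character sum `∑ x, ∑ y, ψ (y * f x)` for the
primitive additive character `ψ` given by the trace. -/
theorem natCard_eq_zero_eq_of_trace_mul_eq [Algebra (ZMod p) K] (σ : K ≃ K) {f g : K → K}
    (h : ∀ x y, Algebra.trace (ZMod p) K (y * f x) = Algebra.trace (ZMod p) K (σ x * g y)) :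
    Nat.card {x // f x = 0} = Nat.card {y // g y = 0} := by
  classical
  have := Fintype.ofFinite K
  let ψ : AddChar K ℂ := (ZMod.stdAddChar (N := p)).compAddMonoidHom
    (Algebra.trace (ZMod p) K).toAddMonoidHom
  have hψ : ψ.IsPrimitive := by
    obtain ⟨a, ha⟩ := Algebra.trace_surjective (ZMod p) K 1
    refine AddChar.IsPrimitive.of_ne_one (AddChar.ne_one_iff.2 ⟨a, fun h1 ↦ ?_⟩)
    refine one_ne_zero (ZMod.injective_stdAddChar (N := p) ?_)
    rw [AddChar.map_zero_eq_one, ← ha]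
    exact h1
  have hψfg : ∀ x y, ψ (y * f x) = ψ (σ x * g y) := fun x y ↦
    congrArg (ZMod.stdAddChar (N := p)) (h x y)
  have hsum : ∀ b : K, ∑ x, ψ (x * b) = if b = 0 then (Fintype.card K : ℂ) else 0 := fun b ↦ by
    rw [AddChar.sum_mulShift b hψ, Nat.cast_ite, Nat.cast_zero]
  have hdouble : ∑ x, ∑ y, ψ (y * f x) = ∑ y, ∑ x, ψ (x * g y) := by
    rw [sum_comm]
    refine sum_congr rfl fun y _ ↦ ?_
    simp only [hψfg]
    exact σ.sum_comp fun x ↦ ψ (x * g y)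
  simp only [hsum, ← sum_filter, sum_const, nsmul_eq_mul] at hdouble
  have hcard := mul_right_cancel₀ (Nat.cast_ne_zero.2 Fintype.card_ne_zero) hdouble
  rw [Nat.card_eq_fintype_card, Nat.card_eq_fintype_card, Fintype.card_subtype,
    Fintype.card_subtype]
  exact_mod_cast hcard

variable {e : ℕ}

theorem weight_add_add [CharP K p] {a : ℕ → K} {s : ℕ} (ha : ∀ j < s, a j = 0) (k t : ℕ) (m : K) :
    weight (p ^ e) (k + s) (t + s) a m = weight (p ^ e) k t (fun j ↦ a (j + s)) m := by
  refine congrArg (Nat.log _) (Nat.card_congr <|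
    (iterateFrobeniusEquiv K p (e * s)).toEquiv.subtypeEquiv fun x ↦ ?_)
  rw [RingEquiv.toEquiv_eq_coe, EquivLike.coe_coe, iterateFrobeniusEquiv_def, pow_mul p,
    show k + s + 1 = s + (k + 1) by omega, sum_range_add,
    sum_eq_zero fun j hj ↦ by rw [ha j (mem_range.1 hj), zero_mul], zero_add]
  simp only [← pow_mul, ← pow_add, ← mul_add, add_comm s]

theorem weight_zero_eq_weight_adjoint [CharP K p] (k : ℕ) (a : ℕ → K) (m : K) :
    weight (p ^ e) k 0 a m =
      weight (p ^ e) k k (fun j ↦ a (k - j) ^ (p ^ e) ^ j) (m ^ (p ^ e) ^ k) := by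
  let := ZMod.algebra K p
  have htrace : ∀ (z : K) (i : ℕ),
      Algebra.trace (ZMod p) K (z ^ (p ^ e) ^ i) = Algebra.trace (ZMod p) K z := fun z i ↦ by
    rw [← pow_mul, trace_pow_char_pow]
  refine congrArg (Nat.log _) ?_
  simp only [← sub_eq_zero (b := m * _), ← sub_eq_zero (b := m ^ _ * _)]
  refine natCard_eq_zero_eq_of_trace_mul_eq (p := p) (iterateFrobeniusEquiv K p (e * k)).toEquiv
    fun x y ↦ ?_
  rw [RingEquiv.toEquiv_eq_coe, EquivLike.coe_coe, iterateFrobeniusEquiv_def, pow_mul p, mul_sub,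
    mul_sub, map_sub, map_sub]
  congr 1
  · rw [mul_sum, mul_sum, map_sum, map_sum, ← sum_range_reflect]
    refine sum_congr rfl fun j hj ↦ ?_
    have hjk : j ≤ k := mem_range_succ_iff.1 hj
    rw [Nat.add_sub_cancel, ← htrace _ j]
    congr 1
    rw [mul_pow, mul_pow, ← pow_mul x, ← pow_add, Nat.sub_add_cancel hjk]
    ring
  · rw [← htrace _ k, pow_zero, pow_one]
    congr 1
    ring

end Adjoint

section Main

theorem four_mul_pow_le_or_sixteen_mul_pow_le {q n M : ℕ}
    (h : (4 ≤ q ∧ (M : ℝ) < (n : ℝ) / 4) ∨ (q = 3 ∧ (M : ℝ) ≤ ((n : ℝ) - 2) / 4) ∨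
      (q = 2 ∧ (M : ℝ) ≤ (n : ℝ) / 4 - 1)) :
    (3 ≤ q ∧ 4 * (q ^ M) ^ 4 ≤ q ^ n) ∨ 16 * (q ^ M) ^ 4 ≤ q ^ n := by
  have hpow : ∀ c, 0 < q → 4 * M + c ≤ n → q ^ c * (q ^ M) ^ 4 ≤ q ^ n := fun c hq hn ↦ by
    rw [← pow_mul, ← pow_add]
    exact Nat.pow_le_pow_right hq (by omega)
  rcases h with ⟨hq, hM⟩ | ⟨rfl, hM⟩ | ⟨rfl, hM⟩
  · have hn : 4 * M + 1 ≤ n := by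
      have : ((4 * M : ℕ) : ℝ) < n := by push_cast; linarith
      exact Nat.cast_lt.1 this
    exact .inl ⟨by omega, (Nat.mul_le_mul_right _ (by rwa [pow_one])).trans (hpow 1 (by omega) hn)⟩
  · have hn : 4 * M + 2 ≤ n := by
      have : ((4 * M + 2 : ℕ) : ℝ) ≤ n := by push_cast; linarith
      exact Nat.cast_le.1 this
    exact .inl ⟨le_rfl, (Nat.mul_le_mul_right _ (by norm_num)).trans (hpow 2 three_pos hn)⟩
  · have hn : 4 * M + 4 ≤ n := by
      have : ((4 * M + 4 : ℕ) : ℝ) ≤ n := by push_cast; linarith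
      exact Nat.cast_le.1 this
    exact .inr (hpow 4 two_pos hn)

variable {K : Type*} [Field K]

theorem one_lt_weight_iff [Finite K] {q : ℕ} (hq : 2 ≤ q) (k t : ℕ) (a : ℕ → K) (m : K) :
    1 < weight q k t a m ↔
      q ^ 2 ≤ Nat.card {x : K // ∑ j ∈ range (k + 1), a j * x ^ q ^ j = m * x ^ q ^ t} := by
  have : Nonempty {x : K // ∑ j ∈ range (k + 1), a j * x ^ q ^ j = m * x ^ q ^ t} :=
    ⟨0, by simp [show q ≠ 0 by omega]⟩
  exact Nat.le_log_iff_pow_le hq Nat.card_pos.ne'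

variable [Fintype K] {p e n k t M : ℕ}

theorem exists_ne_one_lt_weight_of_zero_ne (hp : p.Prime) (he : e ≠ 0)
    (hcard : Fintype.card K = (p ^ e) ^ n) (hk : k ≤ M) (ht : t ≤ M)
    (hM : (3 ≤ p ^ e ∧ 4 * ((p ^ e) ^ M) ^ 4 ≤ (p ^ e) ^ n) ∨
      16 * ((p ^ e) ^ M) ^ 4 ≤ (p ^ e) ^ n)
    {a : ℕ → K} (ha₀ : a 0 ≠ 0) (hat : a t = 0) (ha : ∃ j ≤ k, j ≠ 0 ∧ a j ≠ 0) {m₀ : K}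
    (hm₀ : 1 < weight (p ^ e) k t a m₀) : ∃ m ≠ m₀, 1 < weight (p ^ e) k t a m := by
  classical
  obtain ⟨j, hjk, hj₀, hj⟩ := ha
  set d := Nat.findGreatest (a · ≠ 0) k
  have hdk : d ≤ k := Nat.findGreatest_le k
  have had : a d ≠ 0 := Nat.findGreatest_spec (P := (a · ≠ 0)) hjk hj
  have : Fact p.Prime := ⟨hp⟩
  let D : IndexedQPoly K :=
    { p, e, k := d, t, a
      prime_p := hp
      charP := charP_of_card_eq_prime_pow (f := e * n) (by rw [hcard, pow_mul])
      e_pos := Nat.pos_of_ne_zero he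
      k_pos := (Nat.pos_of_ne_zero hj₀).trans_le (Nat.le_findGreatest hjk hj)
      t_pos := Nat.pos_of_ne_zero fun h ↦ ha₀ (h ▸ hat)
      k_ne_t := fun h ↦ had (h ▸ hat)
      a_zero_ne := ha₀
      a_k_ne := had }
  have hlin : ∀ x : K, D.lin x = ∑ j ∈ range (k + 1), a j * x ^ (p ^ e) ^ j := fun x ↦ by
    change ∑ j ∈ range (d + 1), a j * x ^ (p ^ e) ^ j = _
    refine sum_subset (range_subset_range.2 (by omega)) fun i hi hid ↦ ?_
    rw [mem_range] at hi hid
    rw [not_not.1 (Nat.findGreatest_is_greatest (P := (a · ≠ 0)) (n := k) (by omega) (by omega)),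
      zero_mul]
  have hweight : ∀ m, 1 < weight (p ^ e) k t a m ↔
      D.q ^ 2 ≤ Nat.card {x : K // D.lin x = m * x ^ D.Q} := fun m ↦ by
    simp only [hlin]
    exact one_lt_weight_iff D.two_le_q k t a m
  have hN : D.N ^ 4 ≤ ((p ^ e) ^ M) ^ 4 :=
    Nat.pow_le_pow_left (Nat.pow_le_pow_right D.q_pos (max_le (hdk.trans hk) ht)) 4
  simp only [hweight] at hm₀ ⊢
  refine D.exists_ne_sq_le_natCard hcard (hM.imp (fun h ↦ ⟨h.1, ?_⟩) fun h ↦ ?_) hm₀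
  · exact (Nat.mul_le_mul_left 4 hN).trans h.2
  · exact (Nat.mul_le_mul_left 16 hN).trans h

theorem exists_ne_one_lt_weight_zero (hp : p.Prime) (he : e ≠ 0)
    (hcard : Fintype.card K = (p ^ e) ^ n) (hk : k ≤ M)
    (hM : (3 ≤ p ^ e ∧ 4 * ((p ^ e) ^ M) ^ 4 ≤ (p ^ e) ^ n) ∨
      16 * ((p ^ e) ^ M) ^ 4 ≤ (p ^ e) ^ n)
    {a : ℕ → K} (ha₀ : a 0 = 0) (ha_k : a k ≠ 0) (ha : ∃ j < k, a j ≠ 0) {m₀ : K}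
    (hm₀ : 1 < weight (p ^ e) k 0 a m₀) : ∃ m ≠ m₀, 1 < weight (p ^ e) k 0 a m := by
  have : Fact p.Prime := ⟨hp⟩
  have : CharP K p := charP_of_card_eq_prime_pow (f := e * n) (by rw [hcard, pow_mul])
  obtain ⟨j, hjk, hj⟩ := ha
  simp only [weight_zero_eq_weight_adjoint] at hm₀ ⊢
  obtain ⟨m', hm', hweight⟩ := exists_ne_one_lt_weight_of_zero_ne hp he hcard hk hk hM
    (a := fun j ↦ a (k - j) ^ (p ^ e) ^ j) (pow_ne_zero _ ha_k)
    (by rw [Nat.sub_self, ha₀, zero_pow (pow_ne_zero _ (pow_ne_zero _ hp.ne_zero))])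
    ⟨k - j, Nat.sub_le k j, Nat.sub_ne_zero_of_lt hjk,
      pow_ne_zero _ (by rwa [Nat.sub_sub_self hjk.le])⟩ hm₀
  obtain ⟨m, rfl⟩ := (iterateFrobeniusEquiv K p (e * k)).surjective m'
  rw [iterateFrobeniusEquiv_def, pow_mul p] at hm' hweight
  exact ⟨m, fun h ↦ hm' (h ▸ rfl), hweight⟩

theorem exists_ne_one_lt_weight (hp : p.Prime) (he : e ≠ 0)
    (hcard : Fintype.card K = (p ^ e) ^ n) (hk : k ≤ M) (ht : t ≤ M)
    (hM : (3 ≤ p ^ e ∧ 4 * ((p ^ e) ^ M) ^ 4 ≤ (p ^ e) ^ n) ∨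
      16 * ((p ^ e) ^ M) ^ 4 ≤ (p ^ e) ^ n)
    {a : ℕ → K} (ha_k : a k ≠ 0) (hat : a t = 0) (ha : ∃ j < k, a j ≠ 0) {m₀ : K}
    (hm₀ : 1 < weight (p ^ e) k t a m₀) : ∃ m ≠ m₀, 1 < weight (p ^ e) k t a m := by
  classical
  have : Fact p.Prime := ⟨hp⟩
  have : CharP K p := charP_of_card_eq_prime_pow (f := e * n) (by rw [hcard, pow_mul])
  have hne : ∃ j, a j ≠ 0 := ⟨k, ha_k⟩
  obtain ⟨j₀, hj₀, hlt⟩ : ∃ j₀, a j₀ ≠ 0 ∧ ∀ j < j₀, a j = 0 :=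
    ⟨Nat.find hne, Nat.find_spec hne, fun j hj ↦ not_not.1 (Nat.find_min hne hj)⟩
  obtain ⟨j, hjk, hj⟩ := ha
  have hj₀j : j₀ ≤ j := not_lt.1 fun h ↦ hj (hlt j h)
  rcases le_total t j₀ with htj | hjt
  · obtain ⟨l, rfl⟩ := Nat.exists_eq_add_of_le' (show t ≤ k by omega)
    have hshift := weight_add_add (e := e) (fun i hi ↦ hlt i (hi.trans_le htj)) l 0
    simp only [zero_add] at hshift
    simp only [hshift] at hm₀ ⊢
    exact exists_ne_one_lt_weight_zero hp he hcard (by omega) hM (a := fun i ↦ a (i + t))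
      (by rwa [zero_add]) ha_k
      ⟨j - t, by omega, by rwa [Nat.sub_add_cancel (htj.trans hj₀j)]⟩ hm₀
  · obtain ⟨l, hl⟩ := Nat.exists_eq_add_of_le' (show j₀ ≤ k by omega)
    obtain ⟨s, hs⟩ := Nat.exists_eq_add_of_le' hjt
    rw [hl, hs] at hm₀ ⊢
    simp only [weight_add_add hlt] at hm₀ ⊢
    exact exists_ne_one_lt_weight_of_zero_ne hp he hcard (by omega) (by omega) hM
      (a := fun i ↦ a (i + j₀)) (by rwa [zero_add]) (hs ▸ hat) ⟨l, le_rfl, by omega, hl ▸ ha_k⟩ hm₀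

theorem stmt_3_general {K : Type*} [Field K] [Fintype K] {p e q n k t : ℕ} (hp : p.Prime)
    (he : e ≠ 0) (hq : q = p ^ e) (hcard : Fintype.card K = q ^ n) {a : ℕ → K} (ha_k : a k ≠ 0)
    (hat : a t = 0) (hnotmono : ∃ j < k, a j ≠ 0) (hweight : ∃ m, 1 < weight q k t a m)
    (hnum : (4 ≤ q ∧ ((max k t : ℕ) : ℝ) < (n : ℝ) / 4) ∨
      (q = 3 ∧ ((max k t : ℕ) : ℝ) ≤ ((n : ℝ) - 2) / 4) ∨
      (q = 2 ∧ ((max k t : ℕ) : ℝ) ≤ (n : ℝ) / 4 - 1)) :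
    1 < Nat.card {m : K // 1 < weight q k t a m} := by
  subst hq
  obtain ⟨m₀, hm₀⟩ := hweight
  obtain ⟨m, hne, hm⟩ := exists_ne_one_lt_weight hp he hcard (le_max_left k t) (le_max_right k t)
    (four_mul_pow_le_or_sixteen_mul_pow_le hnum) ha_k hat hnotmono hm₀
  exact Finite.one_lt_card_iff_nontrivial.2
    ⟨⟨m, hm⟩, ⟨m₀, hm₀⟩, fun h ↦ hne (congrArg Subtype.val h)⟩

end Main

/-- an `r`-fat polynomial of index `t` with maximum weight `W ≥ 2` whose
`q`-degree `k` and index `t` are small with respect to `n` satisfies `r > 1`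
(Corollary `cor:rcurve`, second part).  Same encoding as in the other statements:
`K = F_{q^n}`, the weight of `m` is `dim_{F_q} ker (f - m·x^{q^t})`, encoded as
`Nat.log q` of the kernel cardinality. -/
theorem stmt_3 (p e q n k t W r : ℕ) (hp : p.Prime) (he : 1 ≤ e) (hq : q = p ^ e)
    (htn : t < n) (hkn : k < n)
    (K : Type) [Field K] [Fintype K] (hcard : Fintype.card K = q ^ n)
    (a : ℕ → K) (hmonic : a k = 1) (hat : a t = 0)
    (hnotmono : ∃ j, j < k ∧ a j ≠ 0)
    (hstruct :
      (t = 0 ∧ a 0 = 0) ∨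
      (1 ≤ t ∧ a 0 ≠ 0 ∧
        ((t = 1 ∧ 3 ≤ k) ∨
         (2 ≤ t ∧ (t ∣ k → 3 * t ≤ k) ∧ (¬ t ∣ k → 2 * t - 1 ≤ k) ∧
           (((∀ j, 2 ≤ j → j ≤ t → a j = 0) ∧ t + 2 ≤ k) ∨
            (∀ j, 1 ≤ j → j ≤ t → a j = 0))))))
    (f : K → K) (hf : f = fun x => ∑ j ∈ Finset.range (k + 1), a j * x ^ q ^ j)
    (hr : r = Nat.card {m : K // 1 < Nat.log q (Nat.card {x : K // f x = m * x ^ q ^ t})})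
    (hW2 : 2 ≤ W)
    (hWub : ∀ m : K, Nat.log q (Nat.card {x : K // f x = m * x ^ q ^ t}) ≤ W)
    (hWatt : ∃ m : K, Nat.log q (Nat.card {x : K // f x = m * x ^ q ^ t}) = W)
    (hnum :
      (4 ≤ q ∧ ((max k t : ℕ) : ℝ) < (n : ℝ) / 4) ∨
      (q = 3 ∧ ((max k t : ℕ) : ℝ) ≤ ((n : ℝ) - 2) / 4) ∨
      (q = 2 ∧ ((max k t : ℕ) : ℝ) ≤ (n : ℝ) / 4 - 1)) :
    1 < r := by
  subst hr hf
  exact stmt_3_general hp (by omega) hq hcard (hmonic ▸ one_ne_zero) hat hnotmono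
    (hWatt.imp fun _ hm ↦ hW2.trans hm.ge) hnum
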